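/- arXiv:1904.09055 — 10 statements merged into one kernel-verified Lean document; each statement's English description precedes it below -/
import Mathlib

section
/- Let {A_k, f_k} and {B_ℓ, g_ℓ} be two Cauchy inverse systems of cochain complexes of R-modules with limits A_∞ and B_∞ respectively. Let z : ℕ → ℕ be a nondecreasing function with z(ℓ) → ∞ as ℓ → ∞, and suppose given chain maps F_ℓ : B_ℓ → A_{z(ℓ)} that commute with the system maps, i.e. for every ℓ one has F_ℓ ∘ g_ℓ = f_{z(ℓ)} ∘ f_{z(ℓ)+1} ∘ ⋯ ∘ f_{z(ℓ+1)−1} ∘ F_{ℓ+1} (the middle composite being the identity when z(ℓ+1) = z(ℓ)). If |F_ℓ|_h → ∞ as ℓ → ∞, then A_∞ and B_∞ are chain homotopy equivalent. -/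
open CategoryTheory CategoryTheory.Limits

/-- Cochain complexes of `R`-modules, with differential of degree `+1`. -/
abbrev Cx (R : Type) [Ring R] := CochainComplex (ModuleCat R) ℤ

variable {R : Type} [Ring R]

/-- `homOrderGE f d` says that the homological order `|f|_h` is at least `d`:
there is a complex `C`, chain homotopy equivalent to the mapping cone of `f`,
which vanishes in all degrees `< d`. -/
def homOrderGE {A B : Cx R} (f : A ⟶ B) (d : ℤ) : Prop :=
  ∃ C : Cx R, Nonempty (HomotopyEquiv (CochainComplex.mappingCone f) C) ∧
    ∀ i : ℤ, i < d → IsZero (C.X i)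

/-- An inverse system `{A_k, f_k}` is Cauchy if `|f_k|_h → ∞` as `k → ∞`. -/
def IsCauchySystem (A : ℕ → Cx R) (f : ∀ k : ℕ, A (k + 1) ⟶ A k) : Prop :=
  ∀ d : ℤ, ∃ N : ℕ, ∀ k : ℕ, N ≤ k → homOrderGE (f k) d

/-- `(L, ft)` is a limit of the inverse system `{A_k, f_k}`:
the maps `ft k : L ⟶ A k` are compatible with the system maps and
`|ft k|_h → ∞` as `k → ∞`. -/
def IsSystemLimit (A : ℕ → Cx R) (f : ∀ k : ℕ, A (k + 1) ⟶ A k)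
    (L : Cx R) (ft : ∀ k : ℕ, L ⟶ A k) : Prop :=
  (∀ k : ℕ, ft (k + 1) ≫ f k = ft k) ∧
  (∀ d : ℤ, ∃ N : ℕ, ∀ k : ℕ, N ≤ k → homOrderGE (ft k) d)

/-- The composite transition map `A b ⟶ A a` of an inverse system,
`f_a ∘ f_{a+1} ∘ ⋯ ∘ f_{b-1}` (the identity when `a = b`). -/
def transMap (A : ℕ → Cx R) (f : ∀ k : ℕ, A (k + 1) ⟶ A k) (a : ℕ) :
    ∀ b : ℕ, a ≤ b → (A b ⟶ A a)
  | 0, h => eqToHom (by rw [Nat.le_zero.mp h])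
  | b + 1, h =>
    if hab : a = b + 1 then eqToHom (by rw [hab])
    else f b ≫ transMap A f a b (by omega)

open CochainComplex.HomComplex

/-- one degree: tower of abelian groups eventually trivial -/
lemma tower_exists (G : ℕ → Type*) [∀ k, AddCommGroup (G k)] (γ : ∀ k, G (k+1) →+ G k)
    (N : ℕ) (hN : ∀ k, N ≤ k → Subsingleton (G k)) (z : ∀ k, G k) :
    ∃ w : ∀ k, G k, ∀ k, w k - γ k (w (k+1)) = z k := by
  induction N generalizing G with
  | zero => exact ⟨0, fun k => (hN k (Nat.zero_le _)).elim _ _⟩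
  | succ N ih =>
    obtain ⟨w, hw⟩ := ih (fun k => G (k+1)) (fun k => γ (k+1)) (fun k hk => hN _ (by omega))
      (fun k => z (k+1))
    refine ⟨fun k => Nat.casesOn k (z 0 + γ 0 (w 0)) w, ?_⟩
    rintro (_ | k)
    · simp
    · exact hw k

lemma tower_unique (G : ℕ → Type*) [∀ k, AddCommGroup (G k)] (γ : ∀ k, G (k+1) →+ G k)
    (N : ℕ) (hN : ∀ k, N ≤ k → Subsingleton (G k)) (w : ∀ k, G k)
    (hw : ∀ k, w k - γ k (w (k+1)) = 0) (k : ℕ) : w k = 0 := by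
  induction N generalizing G k with
  | zero => exact (hN k (Nat.zero_le _)).elim _ _
  | succ N ih =>
    have h := ih (fun k => G (k+1)) (fun k => γ (k+1)) (fun k hk => hN _ (by omega))
      (fun k => w (k+1)) (fun k => hw (k+1))
    rcases k with _ | k
    · have := hw 0
      rw [h 0] at this
      simpa using this
    · exact h k

section
variable (D : ℕ → Cx R) (γ : ∀ k, D (k+1) ⟶ D k)

/-- postcomposition -/
def postc (X : Cx R) (p q : ℤ) (k : ℕ) : (X.X p ⟶ (D (k+1)).X q) →+ (X.X p ⟶ (D k).X q) where
  toFun u := u ≫ (γ k).f q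
  map_zero' := by simp
  map_add' := by simp

lemma cochain_exists
    (hD : ∀ i : ℤ, ∃ N : ℕ, ∀ k, N ≤ k → IsZero ((D k).X i)) (X : Cx R)
    (n : ℤ) (z : ∀ k, Cochain X (D k) n) :
    ∃ w : ∀ k, Cochain X (D k) n,
      ∀ k, w k - (w (k+1)).comp (Cochain.ofHom (γ k)) (add_zero n) = z k := by
  have key : ∀ p q : ℤ, ∀ h : p + n = q, ∃ w : ∀ k, X.X p ⟶ (D k).X q,
      ∀ k, w k - w (k+1) ≫ (γ k).f q = (z k).v p q h := by
    intro p q h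
    obtain ⟨N, hN⟩ := hD q
    exact tower_exists (fun k => X.X p ⟶ (D k).X q) (postc D γ X p q) N
      (fun k hk => ⟨fun a b => (hN k hk).eq_of_tgt a b⟩) (fun k => (z k).v p q h)
  choose w hw using key
  refine ⟨fun k => Cochain.mk (fun p q h => w p q h k), fun k => ?_⟩
  ext p q h
  simp [hw]

lemma cochain_unique
    (hD : ∀ i : ℤ, ∃ N : ℕ, ∀ k, N ≤ k → IsZero ((D k).X i)) (X : Cx R)
    (n : ℤ) (w : ∀ k, Cochain X (D k) n)
    (hw : ∀ k, w k - (w (k+1)).comp (Cochain.ofHom (γ k)) (add_zero n) = 0) (k : ℕ) : w k = 0 := by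
  refine Cochain.ext _ _ (fun p q h => ?_)
  obtain ⟨N, hN⟩ := hD q
  refine tower_unique (fun k => X.X p ⟶ (D k).X q) (postc D γ X p q) N
      (fun k hk => ⟨fun a b => (hN k hk).eq_of_tgt a b⟩) (fun k => (w k).v p q h) (fun k => ?_) k
  have := Cochain.congr_v (hw k) p q h
  simp only [Cochain.sub_v, Cochain.comp_zero_cochain_v, Cochain.ofHom_v, Cochain.zero_v] at this
  exact this

lemma hom_exists
    (hD : ∀ i : ℤ, ∃ N : ℕ, ∀ k, N ≤ k → IsZero ((D k).X i)) (X : Cx R)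
    (e : ∀ k, X ⟶ D k) :
    ∃ e' : ∀ k, X ⟶ D k, ∀ k, e' k - e' (k+1) ≫ γ k = e k := by
  obtain ⟨w, hw⟩ := cochain_exists D γ hD X 0 (fun k => Cochain.ofHom (e k))
  have hδ : ∀ k, δ 0 1 (w k) = 0 := by
    refine cochain_unique D γ hD X 1 _ (fun k => ?_)
    rw [← δ_comp_ofHom, ← δ_sub, hw, δ_ofHom]
  refine ⟨fun k => Cocycle.homOf (Cocycle.mk (w k) 1 (by norm_num) (hδ k)), fun k => ?_⟩
  apply Cochain.ofHom_injective
  rw [← hw k]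
  simp [Cochain.ofHom_sub, Cochain.ofHom_comp]

lemma hom_unique
    (hD : ∀ i : ℤ, ∃ N : ℕ, ∀ k, N ≤ k → IsZero ((D k).X i)) (X : Cx R)
    (c : ∀ k, X ⟶ D k) (hc : ∀ k, Nonempty (Homotopy (c k) (c (k+1) ≫ γ k))) (k : ℕ) :
    Nonempty (Homotopy (c k) 0) := by
  have hc' : ∀ k, ∃ z : Cochain X (D k) (-1), Cochain.ofHom (c k) =
      δ (-1) 0 z + Cochain.ofHom (c (k+1) ≫ γ k) := fun k =>
    ⟨_, (Cochain.equivHomotopy _ _ (hc k).some).2⟩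
  choose z hz using hc'
  obtain ⟨w, hw⟩ := cochain_exists D γ hD X (-1) z
  have := cochain_unique D γ hD X 0 (fun k => Cochain.ofHom (c k) - δ (-1) 0 (w k)) (fun k => by
    have h1 := hz k
    rw [← hw k, δ_sub, δ_comp_ofHom, Cochain.ofHom_comp] at h1
    rw [Cochain.sub_comp, h1]
    abel) k
  exact ⟨(Cochain.equivHomotopy _ _).symm ⟨w k, by
    rw [Cochain.ofHom_zero, add_zero]; exact sub_eq_zero.mp this⟩⟩
end

/-- quotient functor -/
noncomputable abbrev QQ (R : Type) [Ring R] := HomotopyCategory.quotient (ModuleCat R) (ComplexShape.up ℤ)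

/-- the homotopy category -/
abbrev KK (R : Type) [Ring R] := HomotopyCategory (ModuleCat R) (ComplexShape.up ℤ)

open Pretriangulated

lemma KK_exists (D : ℕ → Cx R) (γ : ∀ k, (QQ R).obj (D (k+1)) ⟶ (QQ R).obj (D k))
    (hD : ∀ i : ℤ, ∃ N : ℕ, ∀ k, N ≤ k → IsZero ((D k).X i)) (X : KK R)
    (e : ∀ k, X ⟶ (QQ R).obj (D k)) :
    ∃ e' : ∀ k, X ⟶ (QQ R).obj (D k), ∀ k, e' k - e' (k+1) ≫ γ k = e k := by
  obtain ⟨X, rfl⟩ := HomotopyCategory.quotient_obj_surjective X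
  obtain ⟨e', he'⟩ := hom_exists D (fun k => (QQ R).preimage (γ k)) hD X
    (fun k => (QQ R).preimage (e k))
  refine ⟨fun k => (QQ R).map (e' k), fun k => ?_⟩
  have := congrArg (QQ R).map (he' k)
  simpa using this

lemma KK_unique (D : ℕ → Cx R) (γ : ∀ k, (QQ R).obj (D (k+1)) ⟶ (QQ R).obj (D k))
    (hD : ∀ i : ℤ, ∃ N : ℕ, ∀ k, N ≤ k → IsZero ((D k).X i)) (X : KK R)
    (c : ∀ k, X ⟶ (QQ R).obj (D k)) (hc : ∀ k, c k = c (k+1) ≫ γ k) (k : ℕ) : c k = 0 := by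
  obtain ⟨X, rfl⟩ := HomotopyCategory.quotient_obj_surjective X
  obtain ⟨h⟩ := hom_unique D (fun k => (QQ R).preimage (γ k)) hD X
    (fun k => (QQ R).preimage (c k)) (fun k => ⟨HomotopyCategory.homotopyOfEq _ _ (by simpa using hc k)⟩) k
  simpa using HomotopyCategory.eq_of_homotopy _ _ h

/-- Triangle with replaced cone. -/
lemma exists_triangle {A B : Cx R} (f : A ⟶ B) (D : Cx R)
    (h : HomotopyEquiv (CochainComplex.mappingCone f) D) :
    ∃ (a : (QQ R).obj B ⟶ (QQ R).obj D) (b : (QQ R).obj D ⟶ ((QQ R).obj A)⟦(1 : ℤ)⟧),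
      Triangle.mk ((QQ R).map f) a b ∈ distTriang (KK R) := by
  let e := HomotopyCategory.isoOfHomotopyEquiv h
  let T := CochainComplex.mappingCone.triangleh f
  refine ⟨T.mor₂ ≫ e.hom, e.inv ≫ T.mor₃, ?_⟩
  refine isomorphic_distinguished _ (HomotopyCategory.mappingCone_triangleh_distinguished f) _ ?_
  exact Triangle.isoMk _ _ (Iso.refl _) (Iso.refl _) e.symm 
    ((Category.comp_id _).trans (Category.id_comp _).symm)
    (by
      refine Eq.trans ?_ (Category.id_comp _).symm
      exact (Category.assoc _ _ _).trans ((congrArg (T.mor₂ ≫ ·) e.hom_inv_id).trans (Category.comp_id _)))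
    (by
      refine Eq.trans (congrArg ((e.inv ≫ T.mor₃) ≫ ·) (CategoryTheory.Functor.map_id _ _)) ?_
      exact Category.comp_id _)

section
variable {C : Type*} [Category C] [Preadditive C] [HasZeroObject C] [HasShift C ℤ]
  [∀ n : ℤ, (shiftFunctor C n).Additive] [Pretriangulated C]

lemma tri_map {L A A' D D' : C} {t : L ⟶ A} {a : A ⟶ D} {b : D ⟶ L⟦(1 : ℤ)⟧}
    {t' : L ⟶ A'} {a' : A' ⟶ D'} {b' : D' ⟶ L⟦(1 : ℤ)⟧}
    (h : Triangle.mk t a b ∈ distTriang C) (h' : Triangle.mk t' a' b' ∈ distTriang C)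
    (f : A ⟶ A') (hf : t ≫ f = t') :
    ∃ γ : D ⟶ D', a ≫ γ = f ≫ a' ∧ b = γ ≫ b' := by
  obtain ⟨c, h1, h2⟩ := complete_distinguished_triangle_morphism _ _ h h' (𝟙 L) f
      (hf.trans (Category.id_comp _).symm)
  refine ⟨c, h1, Eq.trans ?_ h2⟩
  exact ((congrArg (b ≫ ·) (CategoryTheory.Functor.map_id _ L)).trans (Category.comp_id b)).symm

lemma tri_exact₁ {L A D X : C} {t : L ⟶ A} {a : A ⟶ D} {b : D ⟶ L⟦(1 : ℤ)⟧}
    (h : Triangle.mk t a b ∈ distTriang C) (u : X ⟶ L⟦(1 : ℤ)⟧) (hu : u ≫ t⟦(1 : ℤ)⟧' = 0) :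
    ∃ g : X ⟶ D, u = g ≫ b := Triangle.coyoneda_exact₁ _ h u hu

lemma tri_exact₂ {L A D X : C} {t : L ⟶ A} {a : A ⟶ D} {b : D ⟶ L⟦(1 : ℤ)⟧}
    (h : Triangle.mk t a b ∈ distTriang C) (u : X ⟶ A) (hu : u ≫ a = 0) :
    ∃ g : X ⟶ L, u = g ≫ t := Triangle.coyoneda_exact₂ _ h u hu

lemma tri_exact₃ {L A D X : C} {t : L ⟶ A} {a : A ⟶ D} {b : D ⟶ L⟦(1 : ℤ)⟧}
    (h : Triangle.mk t a b ∈ distTriang C) (u : X ⟶ D) (hu : u ≫ b = 0) :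
    ∃ g : X ⟶ A, u = g ≫ a := Triangle.coyoneda_exact₃ _ h u hu

lemma tri_zero₁₂ {L A D : C} {t : L ⟶ A} {a : A ⟶ D} {b : D ⟶ L⟦(1 : ℤ)⟧}
    (h : Triangle.mk t a b ∈ distTriang C) : t ≫ a = 0 := comp_distTriang_mor_zero₁₂ _ h

lemma tri_zero₃₁ {L A D : C} {t : L ⟶ A} {a : A ⟶ D} {b : D ⟶ L⟦(1 : ℤ)⟧}
    (h : Triangle.mk t a b ∈ distTriang C) : b ≫ t⟦(1 : ℤ)⟧' = 0 := comp_distTriang_mor_zero₃₁ _ h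

lemma tri_bij {L A D W : C} {t : L ⟶ A} {a : A ⟶ D} {b : D ⟶ L⟦(1 : ℤ)⟧}
    (h : Triangle.mk t a b ∈ distTriang C) (h0 : ∀ u : W ⟶ D, u = 0)
    (h1 : ∀ u : W⟦(1 : ℤ)⟧ ⟶ D, u = 0) : Function.Bijective (fun u : W ⟶ L => u ≫ t) := by
  constructor
  · intro u v huv
    dsimp only at huv
    obtain ⟨g, hg⟩ := tri_exact₁ h ((u - v)⟦(1 : ℤ)⟧') (by
      rw [← Functor.map_comp, Preadditive.sub_comp, huv, sub_self, Functor.map_zero])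
    rw [h1 g, zero_comp] at hg
    rw [← sub_eq_zero]
    exact (shiftFunctor C (1 : ℤ)).map_injective (hg.trans (Functor.map_zero _ _ _).symm)
  · intro v
    obtain ⟨g, hg⟩ := tri_exact₂ h v (h0 _)
    exact ⟨g, hg.symm⟩

lemma tri_vanish {L A D W W' : C} {t : L ⟶ A} {a : A ⟶ D} {b : D ⟶ L⟦(1 : ℤ)⟧}
    (h : Triangle.mk t a b ∈ distTriang C) (e : W'⟦(1 : ℤ)⟧ ≅ W)
    (hW : Function.Surjective (fun u : W ⟶ L => u ≫ t))
    (hW' : Function.Injective (fun u : W' ⟶ L => u ≫ t)) (u : W ⟶ D) : u = 0 := by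
  have hub : u ≫ b = 0 := by
    have h1 : (shiftFunctor C (1 : ℤ)).preimage (e.hom ≫ u ≫ b) = 0 := by
      apply hW'
      dsimp only
      apply (shiftFunctor C (1 : ℤ)).map_injective
      rw [Functor.map_comp, Functor.map_preimage]
      simp [tri_zero₃₁ h]
    have h2 := congrArg (shiftFunctor C (1 : ℤ)).map h1
    rw [Functor.map_preimage, Functor.map_zero] at h2
    rw [← cancel_epi e.hom, h2, comp_zero]
  obtain ⟨v, rfl⟩ := tri_exact₃ h u hub
  obtain ⟨w, rfl⟩ := hW v
  simp [tri_zero₁₂ h]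
end

/-- weak limit property in the homotopy category -/
lemma weak_limit (L : KK R) (A : ℕ → KK R) (f : ∀ k, A (k+1) ⟶ A k) (D : ℕ → Cx R)
    (hD : ∀ i : ℤ, ∃ N : ℕ, ∀ k, N ≤ k → IsZero ((D k).X i))
    (t : ∀ k, L ⟶ A k) (ht : ∀ k, t (k+1) ≫ f k = t k)
    (a : ∀ k, A k ⟶ (QQ R).obj (D k)) (b : ∀ k, (QQ R).obj (D k) ⟶ L⟦(1 : ℤ)⟧)
    (hT : ∀ k, Triangle.mk (t k) (a k) (b k) ∈ distTriang (KK R))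
    (X : KK R) (φ : ∀ k, X ⟶ A k) (hφ : ∀ k, φ (k+1) ≫ f k = φ k) :
    ∃ l : X ⟶ L, ∀ k, l ≫ t k = φ k := by
  have h1 : ∀ k, ∃ γ : (QQ R).obj (D (k+1)) ⟶ (QQ R).obj (D k),
      a (k+1) ≫ γ = f k ≫ a k ∧ b (k+1) = γ ≫ b k := by
    intro k
    exact tri_map (hT (k+1)) (hT k) (f k) (ht k)
  choose γ hγa hγb using h1
  have h2 : ∀ k, φ k ≫ a k = 0 := KK_unique D γ hD X (fun k => φ k ≫ a k) (fun k => by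
    simp [hγa, ← hφ k])
  have h3 : ∀ k, ∃ l : X ⟶ L, φ k = l ≫ t k := fun k =>
    tri_exact₂ (hT k) (φ k) (h2 k)
  choose l hl using h3
  have h4 : ∀ k, ∃ e : X⟦(1 : ℤ)⟧ ⟶ (QQ R).obj (D k), (l k - l (k+1))⟦(1 : ℤ)⟧' = e ≫ b k := fun k =>
    tri_exact₁ (hT k) _ (by
      rw [← Functor.map_comp, Preadditive.sub_comp, ← hl k, ← ht k, ← Category.assoc, ← hl (k+1), hφ,
        sub_self, Functor.map_zero])
  choose e he using h4
  obtain ⟨e', he'⟩ := KK_exists D γ hD _ e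
  let m : ∀ k, X⟦(1 : ℤ)⟧ ⟶ L⟦(1 : ℤ)⟧ := fun k => (l k)⟦(1 : ℤ)⟧' - e' k ≫ b k
  have hm : ∀ k, m (k+1) = m k := by
    intro k
    have := he k
    rw [← he' k, Functor.map_sub, Preadditive.sub_comp, Category.assoc, ← hγb] at this
    simp only [m]
    rw [sub_eq_sub_iff_sub_eq_sub, ← neg_sub, this, neg_sub]
  have hm0 : ∀ k, m k = m 0 := by
    intro k
    induction k with
    | zero => rfl
    | succ k ih => rw [hm, ih]
  refine ⟨(shiftFunctor (KK R) (1 : ℤ)).preimage (m 0), fun k => ?_⟩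
  apply (shiftFunctor (KK R) (1 : ℤ)).map_injective
  rw [Functor.map_comp, Functor.map_preimage, ← hm0 k, hl k, Functor.map_comp]
  have h5 : b k ≫ (t k)⟦(1 : ℤ)⟧' = 0 := comp_distTriang_mor_zero₃₁ _ (hT k)
  simp [m, h5]

/-- vanishing in degrees at least `n` -/
def BddAbv (W : Cx R) (n : ℤ) : Prop := ∀ p : ℤ, n ≤ p → IsZero (W.X p)

lemma bdd_hom_zero (W D : Cx R) (n : ℤ) (hW : BddAbv W n) (hD : ∀ i < n, IsZero (D.X i))
    (u : (QQ R).obj W ⟶ (QQ R).obj D) : u = 0 := by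
  obtain ⟨u, rfl⟩ := (QQ R).map_surjective u
  have : u = 0 := by
    refine HomologicalComplex.hom_ext _ _ (fun p => ?_)
    by_cases hp : n ≤ p
    · exact (hW p hp).eq_of_src _ _
    · exact (hD p (by omega)).eq_of_tgt _ _
  rw [this, Functor.map_zero]

lemma bij_of_order {A B : Cx R} (f : A ⟶ B) (n : ℤ) (h : homOrderGE f n) (W : Cx R)
    (hW : BddAbv W n) :
    Function.Bijective (fun u : (QQ R).obj W ⟶ (QQ R).obj A => u ≫ (QQ R).map f) := by
  obtain ⟨D, ⟨e⟩, hD⟩ := h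
  obtain ⟨a, b, hT⟩ := exists_triangle f D e
  refine tri_bij hT (fun u => bdd_hom_zero W D n hW hD u) (fun u => ?_)
  revert u
  rw [HomotopyCategory.shift_quotient_obj]
  intro u
  exact bdd_hom_zero (W⟦(1 : ℤ)⟧) D n (fun p hp => hW (p + 1) (by omega)) hD u

lemma contractible_of_test (Y : Cx R)
    (hY : ∀ (n : ℤ) (W : Cx R), BddAbv W n → ∀ u : (QQ R).obj W ⟶ (QQ R).obj Y, u = 0) :
    IsZero ((QQ R).obj Y) := by
  have h1 : ∀ i j : ℤ, i + 1 = j → ∃ s : Y.cycles j ⟶ Y.X i, s ≫ Y.d i j = Y.iCycles j := by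
    intro i j hij
    let u : (HomologicalComplex.single (ModuleCat R) (ComplexShape.up ℤ) j).obj (Y.cycles j) ⟶ Y :=
      HomologicalComplex.mkHomFromSingle (Y.iCycles j) (fun k _ => by simp)
    have hu := hY (j + 1) _ (fun p hp =>
      HomologicalComplex.isZero_single_obj_X _ _ _ _ (by omega)) ((QQ R).map u)
    obtain ⟨hu⟩ := (HomotopyCategory.quotient_map_eq_zero_iff u).1 hu
    have h := hu.comm j
    rw [prevD_eq _ (show (ComplexShape.up ℤ).Rel i j from hij),
      dNext_eq _ (show (ComplexShape.up ℤ).Rel j (j+1) from rfl)] at h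
    simp only [HomologicalComplex.single_obj_d, zero_comp, zero_add, HomologicalComplex.zero_f,
      add_zero] at h
    refine ⟨(HomologicalComplex.singleObjXSelf (ComplexShape.up ℤ) j (Y.cycles j)).inv ≫ hu.hom j i, ?_⟩
    rw [Category.assoc, ← h]
    simp [u]
  choose s hs using h1
  have h2 : ∀ i : ℤ, ∃ p : Y.X i ⟶ Y.cycles i,
      p ≫ Y.iCycles i = 𝟙 _ - Y.toCycles i (i+1) ≫ s i (i+1) rfl := by
    intro i
    have h0 : (𝟙 _ - Y.toCycles i (i+1) ≫ s i (i+1) rfl) ≫ Y.d i (i+1) = 0 := by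
      simp [hs]
    exact ⟨Y.liftCycles _ (i+1) (CochainComplex.next _ _) h0, Y.liftCycles_i _ _ _ _⟩
  choose p hp using h2
  have h3 : ∀ i j, i + 1 = j → Y.d i j ≫ p j = Y.toCycles i j := by
    intro i j hij
    rw [← cancel_mono (Y.iCycles j), Category.assoc, hp]
    simp
  rw [HomotopyCategory.isZero_quotient_obj_iff]
  refine ⟨(Cochain.equivHomotopy _ _).symm
    ⟨Cochain.mk (fun i j h => p i ≫ s j i (by omega)), ?_⟩⟩
  rw [Cochain.ofHom_zero, add_zero]
  refine Cochain.ext _ _ (fun i j hij => ?_)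
  obtain rfl : i = j := by omega
  rw [δ_v (-1) 0 (by norm_num) _ i i hij (i-1) (i+1) rfl rfl]
  simp only [Cochain.mk_v, Cochain.ofHom_v, HomologicalComplex.id_f, Int.negOnePow_zero, one_smul,
    Category.assoc, hs, hp]
  rw [← Category.assoc, h3 _ _ rfl]
  simp

lemma iso_of_test {A B : Cx R} (φ : (QQ R).obj A ⟶ (QQ R).obj B)
    (h : ∀ (n : ℤ) (W : Cx R), BddAbv W n →
      Function.Bijective (fun u : (QQ R).obj W ⟶ (QQ R).obj A => u ≫ φ)) : IsIso φ := by
  obtain ⟨f, rfl⟩ := (QQ R).map_surjective φ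
  obtain ⟨a, b, hT⟩ := exists_triangle f _ (HomotopyEquiv.refl _)
  refine (Triangle.isZero₃_iff_isIso₁ _ hT).1 ?_
  refine contractible_of_test _ (fun n W hW u => ?_)
  refine tri_vanish (W' := (QQ R).obj (W⟦(-1 : ℤ)⟧)) hT ?_ (h n W hW).2
    (h (n+1) (W⟦(-1 : ℤ)⟧) (fun p hp => hW (p + -1) (by omega))).1 u
  rw [← HomotopyCategory.shift_quotient_obj]
  exact shiftNegShift ((QQ R).obj W) (1 : ℤ)

lemma exists_good_cone {A B : Cx R} (f : A ⟶ B) (m : ℕ) :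
    ∃ D : Cx R, Nonempty (HomotopyEquiv (CochainComplex.mappingCone f) D) ∧
      ∀ d : ℕ, d ≤ m → homOrderGE f d → ∀ i : ℤ, i < d → IsZero (D.X i) := by
  classical
  induction m with
  | zero =>
    by_cases h : homOrderGE f ((0 : ℕ) : ℤ)
    · obtain ⟨D, hD, h0⟩ := h
      exact ⟨D, hD, fun d hd _ => by obtain rfl : d = 0 := by omega
                                     exact h0⟩
    · exact ⟨_, ⟨HomotopyEquiv.refl _⟩, fun d hd h' => by
        obtain rfl : d = 0 := by omega
        exact absurd h' h⟩
  | succ m ih =>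
    by_cases h : homOrderGE f ((m + 1 : ℕ) : ℤ)
    · obtain ⟨D, hD, h0⟩ := h
      exact ⟨D, hD, fun d hd _ i hi => h0 i (by omega)⟩
    · obtain ⟨D, hD, h0⟩ := ih
      refine ⟨D, hD, fun d hd h' => ?_⟩
      rcases Nat.lt_or_ge d (m+1) with h1 | h1
      · exact h0 d (by omega) h'
      · obtain rfl : d = m + 1 := by omega
        exact absurd h' h

lemma comp_transMap (A : ℕ → Cx R) (f : ∀ k : ℕ, A (k + 1) ⟶ A k) (L : Cx R) (t : ∀ k, L ⟶ A k)
    (ht : ∀ k, t (k+1) ≫ f k = t k) (a b : ℕ) (h : a ≤ b) : t b ≫ transMap A f a b h = t a := by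
  induction b with
  | zero =>
    obtain rfl : a = 0 := by omega
    simp [transMap]
  | succ b ih =>
    rw [transMap]
    split_ifs with hab
    · subst hab
      simp
    · rw [← Category.assoc, ht, ih]

/-- Proposition 2.13 of [MWGI].  If `{A_k, f_k}` and `{B_ℓ, g_ℓ}` are
Cauchy inverse systems of cochain complexes of `R`-modules with limits `A∞`, `B∞`,
`z : ℕ → ℕ` is nondecreasing with `z(ℓ) → ∞`, and `F_ℓ : B_ℓ ⟶ A_{z(ℓ)}` are chain maps
commuting with the system maps, with `|F_ℓ|_h → ∞`, then `A∞ ≃ B∞`. -/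
theorem compare_inverse_systems
    (A : ℕ → Cx R) (f : ∀ k : ℕ, A (k + 1) ⟶ A k)
    (B : ℕ → Cx R) (g : ∀ ℓ : ℕ, B (ℓ + 1) ⟶ B ℓ)
    (hA : IsCauchySystem A f) (hB : IsCauchySystem B g)
    (Ainf : Cx R) (ft : ∀ k : ℕ, Ainf ⟶ A k) (hAlim : IsSystemLimit A f Ainf ft)
    (Binf : Cx R) (gt : ∀ ℓ : ℕ, Binf ⟶ B ℓ) (hBlim : IsSystemLimit B g Binf gt)
    (z : ℕ → ℕ) (hz : Monotone z) (hztop : Filter.Tendsto z Filter.atTop Filter.atTop)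
    (F : ∀ ℓ : ℕ, B ℓ ⟶ A (z ℓ))
    (hcomm : ∀ ℓ : ℕ, g ℓ ≫ F ℓ = F (ℓ + 1) ≫ transMap A f (z ℓ) (z (ℓ + 1)) (hz (Nat.le_succ ℓ)))
    (hF : ∀ d : ℤ, ∃ N : ℕ, ∀ ℓ : ℕ, N ≤ ℓ → homOrderGE (F ℓ) d) :
    Nonempty (HomotopyEquiv Ainf Binf) := by
  have hlim : ∀ d : ℤ, ∃ N : ℕ, ∀ ℓ : ℕ, N ≤ ℓ → homOrderGE (ft (z ℓ)) d := by
    intro d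
    obtain ⟨N, hN⟩ := hAlim.2 d
    obtain ⟨M, hM⟩ := Filter.eventually_atTop.1 (hztop.eventually_ge_atTop N)
    exact ⟨M, fun ℓ hℓ => hN _ (hM ℓ hℓ)⟩
  have hcone := fun ℓ => exists_good_cone (ft (z ℓ)) ℓ
  choose D e hD using hcone
  have hD' : ∀ i : ℤ, ∃ N : ℕ, ∀ k, N ≤ k → IsZero ((D k).X i) := by
    intro i
    obtain ⟨N, hN⟩ := hlim ((i + 1).toNat : ℕ)
    exact ⟨max N (i+1).toNat, fun k hk => hD k (i+1).toNat (le_trans (le_max_right _ _) hk)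
      (hN k (le_trans (le_max_left _ _) hk)) i (by omega)⟩
  have htri := fun ℓ => exists_triangle (ft (z ℓ)) (D ℓ) (e ℓ).some
  choose a b hT using htri
  obtain ⟨φ, hφ⟩ := weak_limit ((QQ R).obj Ainf) (fun ℓ => (QQ R).obj (A (z ℓ)))
    (fun ℓ => (QQ R).map (transMap A f (z ℓ) (z (ℓ + 1)) (hz (Nat.le_succ ℓ)))) D hD'
    (fun ℓ => (QQ R).map (ft (z ℓ)))
    (fun ℓ => by rw [← Functor.map_comp, comp_transMap A f Ainf ft hAlim.1])
    a b hT ((QQ R).obj Binf) (fun ℓ => (QQ R).map (gt ℓ ≫ F ℓ))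
    (fun ℓ => by rw [← Functor.map_comp, Category.assoc, ← hcomm, ← Category.assoc, hBlim.1])
  have hiso : IsIso φ := by
    refine iso_of_test φ (fun n W hW => ?_)
    obtain ⟨N₁, h₁⟩ := hlim n
    obtain ⟨N₂, h₂⟩ := hBlim.2 n
    obtain ⟨N₃, h₃⟩ := hF n
    let ℓ := max N₁ (max N₂ N₃)
    have b₁ := bij_of_order _ n (h₁ ℓ (by omega)) W hW
    have b₂ := bij_of_order _ n (h₂ ℓ (by omega)) W hW
    have b₃ := bij_of_order _ n (h₃ ℓ (by omega)) W hW
    refine (Function.Bijective.of_comp_iff' b₁ _).1 ?_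
    convert b₃.comp b₂ using 1
    funext u
    have := hφ ℓ
    simp only [Function.comp, Category.assoc, this, Functor.map_comp]
  exact ⟨HomotopyCategory.homotopyEquivOfIso (asIso φ).symm⟩
end

section
/- If f : A → B and g : B → C are chain maps of cochain complexes of R-modules, then the homological order of the composite satisfies |g ∘ f|_h ≥ min(|f|_h, |g|_h). -/
open CategoryTheory CategoryTheory.Limits

variable {R : Type} [Ring R]

/-- For chain maps `f : A ⟶ B` and `g : B ⟶ C` of cochain complexes of
`R`-modules, the homological order of the composite satisfies
`|g ∘ f|_h ≥ min(|f|_h, |g|_h)`: any integer bounding both orders from below also bounds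
the order of the composite. -/
theorem homOrder_comp {A B C : Cx R} (f : A ⟶ B) (g : B ⟶ C) (d : ℤ)
    (hf : homOrderGE f d) (hg : homOrderGE g d) :
    homOrderGE (f ≫ g) d := by
  obtain ⟨X, ⟨eX⟩, hX⟩ := hf
  obtain ⟨Y, ⟨eY⟩, hY⟩ := hg
  let Q := HomotopyCategory.quotient (ModuleCat R) (ComplexShape.up ℤ)
  let T := (CochainComplex.mappingConeCompTriangleh f g).invRotate
  have hT : T ∈ Pretriangulated.distinguishedTriangles :=
    Pretriangulated.inv_rot_of_distTriang _
      (HomotopyCategory.mappingConeCompTriangleh_distinguished f g)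
  let e₁ : T.obj₁ ≅ Q.obj (Y⟦(-1 : ℤ)⟧) :=
    (shiftFunctor _ (-1 : ℤ)).mapIso (HomotopyCategory.isoOfHomotopyEquiv eY) ≪≫
      ((Q.commShiftIso (-1 : ℤ)).app Y).symm
  let e₂ : T.obj₂ ≅ Q.obj X := HomotopyCategory.isoOfHomotopyEquiv eX
  obtain ⟨φ, hφ⟩ := Q.map_surjective (e₁.inv ≫ T.mor₁ ≫ e₂.hom)
  have e := Pretriangulated.isoTriangleOfIso₁₂ T _ hT
    (HomotopyCategory.mappingCone_triangleh_distinguished φ) e₁ e₂ (by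
      change T.mor₁ ≫ e₂.hom = e₁.hom ≫ Q.map φ
      rw [hφ, Iso.hom_inv_id_assoc])
  have e₃ : Q.obj (CochainComplex.mappingCone (f ≫ g)) ≅
      Q.obj (CochainComplex.mappingCone φ) := Pretriangulated.Triangle.π₃.mapIso e
  refine ⟨CochainComplex.mappingCone φ, ⟨HomotopyCategory.homotopyEquivOfIso e₃⟩, ?_⟩
  intro i hi
  rw [CochainComplex.mappingCone.isZero_X_iff]
  exact ⟨hY (i + 1 + -1) (by lia), hX i hi⟩
end

section
/- Limits of inverse systems of cochain complexes are unique up to chain homotopy equivalence: if A_∞ (with structure maps f̃_k) and A'_∞ (with structure maps f̃'_k) are both limits of the same inverse system {A_k, f_k} of cochain complexes of R-modules, then A_∞ and A'_∞ are chain homotopy equivalent. -/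
open CategoryTheory CategoryTheory.Limits

variable {R : Type} [Ring R]

section Helpers

universe v u

open CochainComplex HomComplex

variable {V : Type u} [Category.{v} V] [Preadditive V]

/-- the identity of `X` is homotopic to an endomorphism vanishing in degrees `< d`. -/
structure LowId (X : CochainComplex V ℤ) (P : ℤ → Prop) where
  t : Cochain X X (-1)
  e : X ⟶ X
  eq : Cochain.ofHom (𝟙 X) = δ (-1) 0 t + Cochain.ofHom e
  van : ∀ i, P i → e.f i = 0

lemma LowId.exists_of_equiv {X C : CochainComplex V ℤ} (E : HomotopyEquiv X C) (P : ℤ → Prop)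
    (hC : ∀ i, P i → IsZero (C.X i)) : Nonempty (LowId X P) := by
  let z := Cochain.equivHomotopy _ _ E.homotopyHomInvId.symm
  refine ⟨⟨z.1, E.hom ≫ E.inv, z.2, fun i hi => ?_⟩⟩
  simp [(hC i hi).eq_of_tgt (E.hom.f i) 0]

lemma exists_rec_solution (N : ℕ) : ∀ (M : ℕ → Type v) [∀ k, AddCommGroup (M k)]
    (a : ∀ k, M k) (E : ∀ k, M (k + 1) → M k) (_ : ∀ k, N ≤ k → ∀ x, E k x = 0),
    ∃ h : ∀ k, M k, ∀ k, h k = a k + E k (h (k + 1)) := by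
  induction N with
  | zero =>
    intro M _ a E hE
    exact ⟨a, fun k => by rw [hE k (Nat.zero_le _), add_zero]⟩
  | succ N ih =>
    intro M _ a E hE
    obtain ⟨h, hh⟩ := ih (fun k => M (k + 1)) (fun k => a (k + 1)) (fun k => E (k + 1))
      (fun k hk => hE _ (by omega))
    refine ⟨fun k => Nat.casesOn k (a 0 + E 0 (h 0)) h, fun k => ?_⟩
    cases k with
    | zero => rfl
    | succ k => exact hh k

lemma tower {X : CochainComplex V ℤ} (C : ℕ → CochainComplex V ℤ) (γ : ∀ k, C (k + 1) ⟶ C k)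
    (c : ∀ k, X ⟶ C k) (hc : ∀ k, c (k + 1) ≫ γ k = c k) (P : ℕ → ℤ → Prop)
    (hP : ∀ i, ∃ N, ∀ k, N ≤ k → P k i) (D : ∀ k, LowId (C k) (P k)) :
    ∃ h : ∀ k, Cochain X (C k) (-1), ∀ k, δ (-1) 0 (h k) = Cochain.ofHom (c k) ∧
      ∃ w : Cochain X (C k) (-2),
        (h (k + 1)).comp (Cochain.ofHom (γ k)) (add_zero _) = h k + δ (-2) (-1) w := by
  have key : ∀ (p q : ℤ) (hpq : p + (-1) = q), ∃ h : ∀ k, X.X p ⟶ (C k).X q, ∀ k,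
      h k = (c k).f p ≫ (D k).t.v p q hpq + h (k + 1) ≫ (γ k).f q ≫ (D k).e.f q := by
    intro p q hpq
    obtain ⟨N, hN⟩ := hP q
    exact exists_rec_solution N (fun k => X.X p ⟶ (C k).X q)
      (fun k => (c k).f p ≫ (D k).t.v p q hpq)
      (fun k x => x ≫ (γ k).f q ≫ (D k).e.f q)
      (fun k hk x => by rw [(D k).van q (hN k hk)]; simp)
  choose h0 hh0 using key
  let h : ∀ k, Cochain X (C k) (-1) := fun k => Cochain.mk (fun p q hpq => h0 p q hpq k)
  have hh : ∀ k, h k = (Cochain.ofHom (c k)).comp (D k).t (zero_add _) +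
      ((h (k + 1)).comp (Cochain.ofHom (γ k)) (add_zero _)).comp (Cochain.ofHom (D k).e)
        (add_zero _) := by
    intro k
    ext p q hpq
    simpa [h] using hh0 p q hpq k
  have ht : ∀ k, δ (-1) 0 (D k).t = Cochain.ofHom (𝟙 _) - Cochain.ofHom (D k).e := by
    intro k
    rw [(D k).eq]; abel
  have hr : ∀ k, Cochain.ofHom (c k) - δ (-1) 0 (h k) =
      ((Cochain.ofHom (c (k + 1)) - δ (-1) 0 (h (k + 1))).comp
        (Cochain.ofHom (γ k)) (add_zero _)).comp (Cochain.ofHom (D k).e) (add_zero _) := by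
    intro k
    rw [hh k, δ_add, δ_ofHom_comp, δ_comp_ofHom, δ_comp_ofHom, ht, Cochain.sub_comp,
      Cochain.sub_comp, ← Cochain.ofHom_comp, hc, Cochain.comp_sub, Cochain.comp_id]
    abel
  have hδ : ∀ k, δ (-1) 0 (h k) = Cochain.ofHom (c k) := by
    intro k
    symm
    rw [← sub_eq_zero]
    ext p
    obtain ⟨N, hN⟩ := hP p
    have : ∀ m k, N ≤ k + m →
        (Cochain.ofHom (c k) - δ (-1) 0 (h k)).v p p (add_zero p) = 0 := by
      intro m
      induction m with
      | zero =>
        intro k hk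
        rw [hr k, Cochain.comp_zero_cochain_v, Cochain.ofHom_v, (D k).van p (hN k hk), comp_zero]
      | succ m ih =>
        intro k hk
        rw [hr k, Cochain.comp_zero_cochain_v, Cochain.comp_zero_cochain_v,
          ih (k + 1) (by omega), zero_comp, zero_comp]
    exact this N k (by omega)
  refine ⟨h, fun k => ⟨hδ k,
    ((h (k + 1)).comp (Cochain.ofHom (γ k)) (add_zero _)).comp (D k).t (by norm_num), ?_⟩⟩
  rw [δ_comp _ _ _ 0 0 (-1) (by norm_num) (by norm_num) (by norm_num), ht, δ_comp_ofHom, hδ,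
    ← Cochain.ofHom_comp, hc, Cochain.comp_sub, Cochain.comp_id]
  rw [hh k]
  have : (-1 : ℤ).negOnePow = -1 := rfl
  rw [this, Units.neg_smul, one_smul]
  abel

lemma contractible_of_local {X : CochainComplex V ℤ}
    (H : ∀ i, ∃ t : Cochain X X (-1),
      (Cochain.ofHom (𝟙 X)).v i i (add_zero i) = (δ (-1) 0 t).v i i (add_zero i)) :
    Nonempty (Homotopy (𝟙 X) 0) := by
  choose t ht using H
  have ht' : ∀ i p q (hp : i + (-1) = p) (hq : q + (-1) = i),
      (t i).v i p hp ≫ X.d p i + X.d i q ≫ (t i).v q i hq = 𝟙 _ := by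
    intro i p q hp hq
    have := ht i
    rw [δ_v (-1) 0 (by norm_num) (t i) i i (add_zero i) p q (by omega) (by omega)] at this
    simpa using this.symm
  let π : ∀ i, X.X i ⟶ X.X i := fun i => (t i).v i (i - 1) (by omega) ≫ X.d (i - 1) i
  have hπ : ∀ i p (hp : i + (-1) = p), π i = (t i).v i p hp ≫ X.d p i := by
    intro i p hp
    obtain rfl : p = i - 1 := by omega
    rfl
  -- anything landing in cycles is fixed by `π`
  have fixπ : ∀ i j, i + 1 = j → ∀ {Z : V} (z : Z ⟶ X.X i), z ≫ X.d i j = 0 → z ≫ π i = z := by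
    intro i j hij Z z hz
    have h1 := ht' i (i - 1) j (by omega) (by omega)
    have : π i = 𝟙 _ - X.d i j ≫ (t i).v j i (by omega) := by rw [← h1]; simp [π]
    rw [this, Preadditive.comp_sub, reassoc_of% hz]; simp
  have πd : ∀ i j, π i ≫ X.d i j = 0 := by intro i j; simp [π]
  let s : Cochain X X (-1) := Cochain.mk (fun i p hp =>
    π i ≫ (t i).v i p hp ≫ (𝟙 _ - π p))
  refine ⟨(Cochain.equivHomotopy _ _).symm ⟨s, ?_⟩⟩
  ext i
  rw [Cochain.ofHom_zero, add_zero, δ_v (-1) 0 (by norm_num) s i i (add_zero i) (i - 1) (i + 1)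
    rfl rfl]
  have e1 : s.v i (i - 1) (by omega) ≫ X.d (i - 1) i = π i := by
    simp only [s, Cochain.mk_v, Category.assoc, Preadditive.sub_comp, πd, sub_zero,
      Category.id_comp]
    rw [← hπ i (i - 1) (by omega)]
    exact fixπ i (i + 1) rfl _ (πd _ _)
  have e2 : X.d i (i + 1) ≫ s.v (i + 1) i (by omega) = 𝟙 _ - π i := by
    have a1 : X.d i (i + 1) ≫ π (i + 1) = X.d i (i + 1) :=
      fixπ (i + 1) (i + 2) (by omega) _ (by simp)
    simp only [s, Cochain.mk_v]
    rw [reassoc_of% a1]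
    have a2 : (X.d i (i + 1) ≫ (t (i + 1)).v (i + 1) i (by omega) - 𝟙 _) ≫ π i =
        X.d i (i + 1) ≫ (t (i + 1)).v (i + 1) i (by omega) - 𝟙 _ := by
      apply fixπ i (i + 1) rfl
      rw [Preadditive.sub_comp, Category.assoc, ← hπ, a1, Category.id_comp, sub_self]
    rw [Preadditive.sub_comp, Category.assoc, Category.id_comp] at a2
    rw [Preadditive.comp_sub, Preadditive.comp_sub, Category.comp_id]
    rw [sub_eq_sub_iff_add_eq_add] at a2 ⊢
    rw [add_comm (𝟙 _), ← a2]
  rw [e1, e2]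
  simp

section Cone

variable [HasBinaryBiproducts V]

open mappingCone

lemma exists_map (A : ℕ → CochainComplex V ℤ) (f : ∀ k, A (k + 1) ⟶ A k)
    {L L' : CochainComplex V ℤ} (ft : ∀ k, L ⟶ A k) (ft' : ∀ k, L' ⟶ A k)
    (h1 : ∀ k, ft (k + 1) ≫ f k = ft k) (h2 : ∀ k, ft' (k + 1) ≫ f k = ft' k)
    (P : ℕ → ℤ → Prop) (hP : ∀ i, ∃ N, ∀ k, N ≤ k → P k i)
    (D : ∀ k, LowId (mappingCone (ft k)) (P k)) :
    ∃ g : L' ⟶ L, ∀ k, ∃ η : Cochain L' (A k) (-1),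
      Cochain.ofHom (ft' k) = δ (-1) 0 η + Cochain.ofHom (g ≫ ft k) := by
  let γ : ∀ k, mappingCone (ft (k + 1)) ⟶ mappingCone (ft k) := fun k =>
    desc _ (inl (ft k)) (f k ≫ inr (ft k)) (by rw [δ_inl, ← h1 k, Category.assoc])
  have hγ : ∀ k, (Cochain.ofHom (γ k)).comp (fst (ft k)).1 (zero_add 1) =
      (fst (ft (k + 1))).1 := by
    intro k
    rw [ext_cochain_from_iff (ft (k + 1)) 0 1 (by norm_num)]
    constructor
    · rw [← Cochain.comp_assoc_of_second_is_zero_cochain]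
      simp [γ]
    · rw [← Cochain.comp_assoc_of_first_is_zero_cochain, ← Cochain.ofHom_comp]
      simp [γ, Cochain.ofHom_comp]
  obtain ⟨h, hh⟩ := tower (fun k => mappingCone (ft k)) γ (fun k => ft' k ≫ inr (ft k))
    (fun k => by simp [γ, ← h2 k]) P hP D
  have neg : (1 : ℤ).negOnePow = -1 := rfl
  let G : ∀ k, Cochain L' L 0 := fun k => (h k).comp (fst (ft k)).1 (by norm_num)
  have hG : δ 0 1 (G 0) = 0 := by
    simp only [G]
    rw [δ_comp _ _ _ 0 2 1 (by norm_num) (by norm_num) (by norm_num), (hh 0).1,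
      Cochain.ofHom_comp, Cochain.comp_assoc_of_first_is_zero_cochain]
    simp
  have hG2 : ∀ k, ∃ z : Cochain L' L (-1), G k = G 0 + δ (-1) 0 z := by
    intro k
    induction k with
    | zero => exact ⟨0, by simp⟩
    | succ k ih =>
      obtain ⟨z, hz⟩ := ih
      obtain ⟨w, hw⟩ := (hh k).2
      refine ⟨z - w.comp (fst (ft k)).1 (by norm_num), ?_⟩
      have e1 : G (k + 1) = G k + (δ (-2) (-1) w).comp (fst (ft k)).1 (by norm_num) := by
        simp only [G]
        rw [← Cochain.add_comp, ← hw, Cochain.comp_assoc_of_second_is_zero_cochain, hγ]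
      rw [e1, hz, δ_sub, δ_comp w _ _ (-1) 2 0 (by norm_num) (by norm_num) (by norm_num), neg]
      simp [add_assoc]
  let g : L' ⟶ L := Cocycle.homOf (Cocycle.mk (G 0) 1 (by norm_num) hG)
  have hg : Cochain.ofHom g = G 0 := by simp [g]
  refine ⟨g, fun k => ?_⟩
  obtain ⟨z, hz⟩ := hG2 k
  refine ⟨(h k).comp (snd (ft k)) (add_zero _) + z.comp (Cochain.ofHom (ft k)) (add_zero _), ?_⟩
  rw [Cochain.ofHom_comp, hg, δ_add, δ_comp_ofHom, add_assoc, ← Cochain.add_comp,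
    add_comm _ (G 0), ← hz, δ_comp_zero_cochain _ _ _ (by norm_num), (hh k).1, δ_snd,
    Cochain.ofHom_comp, Cochain.comp_assoc_of_first_is_zero_cochain, inr_snd, Cochain.comp_id,
    Cochain.comp_neg, ← Cochain.comp_assoc_of_third_is_zero_cochain]
  simp only [G]
  abel

lemma low_of_phantom {L A : CochainComplex V ℤ} (φ : L ⟶ A) {P : ℤ → Prop}
    (D : LowId (mappingCone φ) P) (n : L ⟶ L) (η : Cochain L A (-1))
    (hη : Cochain.ofHom (n ≫ φ) = δ (-1) 0 η) :
    ∃ ζ : Cochain L L (-1), ∀ i, P (i - 1) →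
      (Cochain.ofHom n).v i i (add_zero i) = (δ (-1) 0 ζ).v i i (add_zero i) := by
  have neg : (1 : ℤ).negOnePow = -1 := rfl
  let z : Cochain L (mappingCone φ) (-1) :=
    (Cochain.ofHom n).comp (inl φ) (zero_add _) -
      η.comp (Cochain.ofHom (inr φ)) (add_zero _)
  have hz : δ (-1) 0 z = 0 := by
    simp only [z]
    rw [δ_sub, δ_ofHom_comp, δ_comp_ofHom, ← hη, δ_inl, ← Cochain.ofHom_comp,
      ← Cochain.ofHom_comp, Category.assoc, sub_self]
  have hz1 : z.comp (fst φ).1 (neg_add_cancel 1) = Cochain.ofHom n := by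
    simp only [z]
    rw [Cochain.sub_comp, Cochain.comp_assoc_of_first_is_zero_cochain,
      Cochain.comp_assoc_of_second_is_zero_cochain]
    simp
  have hz2 : z = δ (-2) (-1) (z.comp D.t (by norm_num)) +
      z.comp (Cochain.ofHom D.e) (add_zero _) := by
    rw [δ_comp z _ _ 0 0 (-1) (by norm_num) (by norm_num) (by norm_num), hz]
    rw [Cochain.zero_comp, smul_zero, add_zero, ← Cochain.comp_add, ← D.eq, Cochain.comp_id]
  refine ⟨-(z.comp D.t (show _ = -2 by norm_num)).comp (fst φ).1 (by norm_num), fun i hi => ?_⟩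
  rw [← hz1]
  nth_rw 1 [hz2]
  rw [Cochain.add_comp, δ_neg,
    δ_comp (z.comp D.t _) _ _ (-1) 2 0 (by norm_num) (by norm_num) (by norm_num), neg]
  have : ((z.comp (Cochain.ofHom D.e) (add_zero _)).comp (fst φ).1
      (neg_add_cancel 1)).v i i (add_zero i) = 0 := by
    rw [Cochain.comp_v _ _ (neg_add_cancel 1) i (i - 1) i (by omega) (by omega)]
    simp [D.van _ hi]
  rw [Cochain.add_v, this]
  simp

lemma cone_id_low {L : CochainComplex V ℤ} (m : L ⟶ L) (i : ℤ)
    (h0 : m.f i = 𝟙 _) (h1 : m.f (i + 1) = 𝟙 _) :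
    (Cochain.ofHom (𝟙 (mappingCone m))).v i i (add_zero i) =
      (δ (-1) 0 ((snd m).comp (inl m) (zero_add _))).v i i (add_zero i) := by
  have neg : (-1 : ℤ).negOnePow = -1 := rfl
  rw [δ_zero_cochain_comp _ _ _ (by norm_num), δ_inl, δ_snd, neg, Cochain.ofHom_v,
    HomologicalComplex.id_f, ← id_X m i (i + 1) rfl]
  simp only [Units.neg_smul, one_smul, Cochain.neg_comp, neg_neg, Cochain.add_v,
    Cochain.comp_v _ _ (add_neg_cancel 1) i (i + 1) i rfl (by omega),
    Cochain.comp_zero_cochain_v, Cochain.ofHom_v, HomologicalComplex.comp_f, h0, h1]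
  simp [add_comm]

variable [HasZeroObject V]

lemma isIso_of_low {L : CochainComplex V ℤ} (m : L ⟶ L)
    (H : ∀ d : ℤ, ∃ ζ : Cochain L L (-1), ∀ i, i < d →
      (Cochain.ofHom (m - 𝟙 L)).v i i (add_zero i) = (δ (-1) 0 ζ).v i i (add_zero i)) :
    IsIso ((HomotopyCategory.quotient V (ComplexShape.up ℤ)).map m) := by
  have hd : ∀ {a : L ⟶ L}, triangleh a ∈ distTriang (HomotopyCategory V (ComplexShape.up ℤ)) :=
    fun {a} => HomotopyCategory.mappingCone_triangleh_distinguished a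
  have hzero : IsZero ((HomotopyCategory.quotient V (ComplexShape.up ℤ)).obj (mappingCone m)) := by
    rw [HomotopyCategory.isZero_quotient_obj_iff]
    apply contractible_of_local
    intro i
    obtain ⟨ζ, hζ⟩ := H (i + 2)
    obtain ⟨ν, e⟩ : ∃ ν : L ⟶ L, δ (-1) 0 ζ = Cochain.ofHom ν := ⟨_, δ_neg_one_cochain ζ⟩
    let m' := m - ν
    have hm : Homotopy m m' := (Cochain.equivHomotopy _ _).symm
      ⟨ζ, by rw [e, ← Cochain.ofHom_add]; simp [m']⟩
    have hm' : ∀ j, j < i + 2 → m'.f j = 𝟙 _ := by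
      intro j hj
      have := hζ j hj
      rw [e, Cochain.ofHom_v, Cochain.ofHom_v] at this
      simp [m', ← this]
    have hq := HomotopyCategory.eq_of_homotopy _ _ hm
    obtain ⟨E, -⟩ := Pretriangulated.exists_iso_of_arrow_iso _ _ (hd (a := m)) (hd (a := m'))
      (eqToIso (congrArg (fun a => Arrow.mk a) hq))
    let F : HomotopyEquiv (mappingCone m) (mappingCone m') :=
      HomotopyCategory.homotopyEquivOfIso (Pretriangulated.Triangle.π₃.mapIso E)
    obtain ⟨z, hz⟩ := Cochain.equivHomotopy _ _ F.homotopyHomInvId.symm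
    have hc := cone_id_low m' i (hm' _ (by omega)) (hm' _ (by omega))
    refine ⟨z + ((Cochain.ofHom F.hom).comp ((snd m').comp (inl m') (zero_add _))
      (zero_add _)).comp (Cochain.ofHom F.inv) (add_zero _), ?_⟩
    rw [hz, δ_add, δ_comp_ofHom, δ_ofHom_comp, Cochain.add_v, Cochain.add_v,
      Cochain.comp_zero_cochain_v, Cochain.zero_cochain_comp_v, ← hc]
    simp
  exact (Pretriangulated.Triangle.isZero₃_iff_isIso₁ _ (hd (a := m))).1 hzero

lemma isIso_of_compat (A : ℕ → CochainComplex V ℤ)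
    {L L' : CochainComplex V ℤ} (ft : ∀ k, L ⟶ A k) (ft' : ∀ k, L' ⟶ A k)
    (hD : ∀ d : ℤ, ∃ k, Nonempty (LowId (mappingCone (ft k)) (fun i => i < d)))
    (g : L' ⟶ L) (hg : ∀ k, ∃ η : Cochain L' (A k) (-1),
      Cochain.ofHom (ft' k) = δ (-1) 0 η + Cochain.ofHom (g ≫ ft k))
    (g' : L ⟶ L') (hg' : ∀ k, ∃ η : Cochain L (A k) (-1),
      Cochain.ofHom (ft k) = δ (-1) 0 η + Cochain.ofHom (g' ≫ ft' k)) :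
    IsIso ((HomotopyCategory.quotient V (ComplexShape.up ℤ)).map (g' ≫ g)) := by
  apply isIso_of_low
  intro d
  obtain ⟨k, ⟨D⟩⟩ := hD d
  obtain ⟨η, hη⟩ := hg k
  obtain ⟨η', hη'⟩ := hg' k
  obtain ⟨ζ, hζ⟩ := low_of_phantom (ft k) D (g' ≫ g - 𝟙 L)
    (-η' - (Cochain.ofHom g').comp η (zero_add _)) (by
      rw [δ_sub, δ_neg, δ_ofHom_comp, Preadditive.sub_comp, Cochain.ofHom_sub, Category.id_comp,
        hη', Cochain.ofHom_comp g' (ft' k), hη, Cochain.comp_add, Category.assoc,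
        Cochain.ofHom_comp g']
      abel)
  exact ⟨ζ, fun i hi => hζ i (by omega)⟩

end Cone

end Helpers

lemma exists_lowId {A : ℕ → Cx R} {L : Cx R} {ft : ∀ k : ℕ, L ⟶ A k}
    (h : ∀ d : ℤ, ∃ N : ℕ, ∀ k : ℕ, N ≤ k → homOrderGE (ft k) d) :
    ∃ P : ℕ → ℤ → Prop, (∀ i, ∃ N, ∀ k, N ≤ k → P k i) ∧
      ∀ k, Nonempty (LowId (CochainComplex.mappingCone (ft k)) (P k)) := by
  classical
  let d : ℕ → ℕ := fun k => Nat.findGreatest (fun d => homOrderGE (ft k) (d : ℤ)) k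
  refine ⟨fun k i => d k ≠ 0 ∧ i < d k, fun i => ?_, fun k => ?_⟩
  · obtain ⟨N, hN⟩ := h ((i.toNat + 1 : ℕ) : ℤ)
    refine ⟨max N (i.toNat + 1), fun k hk => ?_⟩
    have : i.toNat + 1 ≤ d k := Nat.le_findGreatest (le_trans (le_max_right _ _) hk)
      (hN k (le_trans (le_max_left _ _) hk))
    constructor <;> omega
  · by_cases hk : d k = 0
    · exact LowId.exists_of_equiv (HomotopyEquiv.refl _) _ (fun i hi => absurd hk hi.1)
    · obtain ⟨C, ⟨E⟩, hC⟩ : homOrderGE (ft k) (d k : ℤ) := Nat.findGreatest_of_ne_zero rfl hk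
      exact LowId.exists_of_equiv E _ (fun i hi => hC i hi.2)

lemma exists_lowId' {A : ℕ → Cx R} {L : Cx R} {ft : ∀ k : ℕ, L ⟶ A k}
    (h : ∀ d : ℤ, ∃ N : ℕ, ∀ k : ℕ, N ≤ k → homOrderGE (ft k) d) (d : ℤ) :
    ∃ k, Nonempty (LowId (CochainComplex.mappingCone (ft k)) (fun i => i < d)) := by
  obtain ⟨N, hN⟩ := h d
  obtain ⟨C, ⟨E⟩, hC⟩ := hN N le_rfl
  exact ⟨N, LowId.exists_of_equiv E _ hC⟩

/-- Limits of inverse systems of cochain complexes are unique up to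
chain homotopy equivalence. -/
theorem systemLimit_unique (A : ℕ → Cx R) (f : ∀ k : ℕ, A (k + 1) ⟶ A k)
    (L : Cx R) (ft : ∀ k : ℕ, L ⟶ A k) (hL : IsSystemLimit A f L ft)
    (L' : Cx R) (ft' : ∀ k : ℕ, L' ⟶ A k) (hL' : IsSystemLimit A f L' ft') :
    Nonempty (HomotopyEquiv L L') := by
  obtain ⟨P, hP, hD⟩ := exists_lowId hL.2
  obtain ⟨P', hP', hD'⟩ := exists_lowId hL'.2
  obtain ⟨g, hg⟩ := exists_map A f ft ft' hL.1 hL'.1 P hP (fun k => (hD k).some)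
  obtain ⟨g', hg'⟩ := exists_map A f ft' ft hL'.1 hL.1 P' hP' (fun k => (hD' k).some)
  have i1 := isIso_of_compat A ft ft' (exists_lowId' hL.2) g hg g' hg'
  have i2 := isIso_of_compat A ft' ft (exists_lowId' hL'.2) g' hg' g hg
  let Q := HomotopyCategory.quotient (ModuleCat R) (ComplexShape.up ℤ)
  rw [Functor.map_comp] at i1 i2
  have : IsSplitMono (Q.map g') := IsSplitMono.mk' ⟨Q.map g ≫ inv (Q.map g' ≫ Q.map g), by
    rw [← Category.assoc]; exact IsIso.hom_inv_id _⟩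
  have : IsSplitEpi (Q.map g') := IsSplitEpi.mk' ⟨inv (Q.map g ≫ Q.map g') ≫ Q.map g, by
    rw [Category.assoc]; exact IsIso.inv_hom_id _⟩
  have : IsIso (Q.map g') := isIso_of_mono_of_isSplitEpi _
  exact ⟨HomotopyCategory.homotopyEquivOfIso (asIso (Q.map g'))⟩
end

section
/- Let A be a cochain complex of R-modules with A^i = 0 for all i < 0 and with a direct sum decomposition A^0 = A^0_1 ⊕ A^0_2. Let π* : A → D be the chain map to the complex D concentrated in degree 0 with D^0 = A^0_2, given in degree 0 by the projection A^0 → A^0_2. If π* is chain homotopic to the zero map, then A is chain homotopy equivalent to a cochain complex A' with A'^i = 0 for all i < 0, A'^0 = A^0_1, and such that the brutal truncation A'^{≥1} (the complex formed by the terms of A' in degrees ≥ 1) is a direct summand of the brutal truncation A^{≥1}: there exist chain maps ι : A'^{≥1} → A^{≥1} and ρ : A^{≥1} → A'^{≥1} with ρ ∘ ι = id. -/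
open CategoryTheory CategoryTheory.Limits

variable {R : Type} [Ring R]

/-- Lemma 2.7, "Matt's lemma".  Let `A` be a cochain complex of
`R`-modules vanishing in negative degrees, with a direct sum decomposition
`A^0 ≅ M₁ ⊞ M₂`.  Let `π : A ⟶ D` be the chain map to the complex `D` concentrated in
degree `0` with `D^0 = M₂`, given in degree `0` by the projection onto `M₂`.  If `π` is
chain homotopic to the zero map, then `A` is chain homotopy equivalent to a complex `A'`
vanishing in negative degrees with `A'^0 ≅ M₁`, whose brutal truncation `A'^{≥1}` is a
direct summand of the brutal truncation `A^{≥1}` (expressed degreewise: there are chain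
maps `ι : A'^{≥1} ⟶ A^{≥1}` and `ρ : A^{≥1} ⟶ A'^{≥1}` with `ρ ∘ ι = id`). -/
theorem remove_summand_of_nullhomotopic_projection
    (A : Cx R) (hA : ∀ i : ℤ, i < 0 → IsZero (A.X i))
    (M₁ M₂ : ModuleCat R) (e : A.X 0 ≅ M₁ ⊞ M₂)
    (π : A ⟶ (HomologicalComplex.single (ModuleCat R) (ComplexShape.up ℤ) 0).obj M₂)
    (hπ : π.f 0 = e.hom ≫ biprod.snd ≫
      (HomologicalComplex.singleObjXSelf (ComplexShape.up ℤ) 0 M₂).inv)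
    (hnull : Nonempty (Homotopy π 0)) :
    ∃ (A' : Cx R) (_ : HomotopyEquiv A A'),
      (∀ i : ℤ, i < 0 → IsZero (A'.X i)) ∧
      Nonempty (A'.X 0 ≅ M₁) ∧
      ∃ (ι : ∀ i : ℤ, 1 ≤ i → (A'.X i ⟶ A.X i)) (ρ : ∀ i : ℤ, 1 ≤ i → (A.X i ⟶ A'.X i)),
        (∀ (i : ℤ) (hi : 1 ≤ i),
          ι i hi ≫ A.d i (i + 1) = A'.d i (i + 1) ≫ ι (i + 1) (by omega)) ∧
        (∀ (i : ℤ) (hi : 1 ≤ i),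
          ρ i hi ≫ A'.d i (i + 1) = A.d i (i + 1) ≫ ρ (i + 1) (by omega)) ∧
        (∀ (i : ℤ) (hi : 1 ≤ i), ι i hi ≫ ρ i hi = 𝟙 (A'.X i)) := by
  obtain ⟨hh⟩ := hnull
  -- the contraction of the projection
  obtain ⟨h, hh1⟩ : ∃ h : A.X 1 ⟶ M₂, A.d 0 1 ≫ h = e.hom ≫ biprod.snd := by
    refine ⟨hh.hom 1 0 ≫ (HomologicalComplex.singleObjXSelf (ComplexShape.up ℤ) 0 M₂).hom, ?_⟩
    have h1 := hh.comm 0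
    rw [dNext_eq hh.hom (show (ComplexShape.up ℤ).Rel 0 1 by simp),
      prevD_eq hh.hom (show (ComplexShape.up ℤ).Rel (-1) 0 by simp), hπ] at h1
    simp only [HomologicalComplex.single_obj_d, comp_zero, add_zero,
      HomologicalComplex.zero_f] at h1
    rw [← Category.assoc, ← h1]
    simp
  let s : M₂ ⟶ A.X 0 := biprod.inr ≫ e.inv
  have hs : s ≫ A.d 0 1 ≫ h = 𝟙 _ := by
    rw [hh1]; simp [s]
  let H : ∀ i j : ℤ, (ComplexShape.up ℤ).Rel j i → (A.X i ⟶ A.X j) := fun i j _ =>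
    if hij : i = 1 ∧ j = 0 then
      (A.XIsoOfEq hij.1).hom ≫ (h ≫ s) ≫ (A.XIsoOfEq hij.2).inv else 0
  have H10 : ∀ r, H 1 0 r = h ≫ s := by
    intro r; simp [H]
  have Hz : ∀ i j r, i ≠ 1 → H i j r = 0 := by
    intro i j r hi; simp [H, hi]
  let N : A ⟶ A := Homotopy.nullHomotopicMap' H
  have hN : Homotopy N 0 := Homotopy.nullHomotopy' H
  have Nf : ∀ k : ℤ, N.f k = A.d k (k + 1) ≫ H (k + 1) k (by simp) +
      H k (k - 1) (by simp) ≫ A.d (k - 1) k := by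
    intro k
    exact Homotopy.nullHomotopicMap'_f (k₂ := k - 1) (k₁ := k) (k₀ := k + 1)
      (by simp) (by simp) H
  have N0 : N.f 0 = e.hom ≫ biprod.snd ≫ s := by
    rw [Nf 0, Hz 0 (0 - 1) (by simp) (by omega), zero_comp, add_zero]
    have : A.d 0 (0 + 1) ≫ H (0 + 1) 0 (by simp) = A.d 0 1 ≫ h ≫ s := by
      rw [← H10 (by simp)]; rfl
    rw [this, ← Category.assoc, hh1, Category.assoc]
  have N1 : N.f 1 = h ≫ s ≫ A.d 0 1 := by
    rw [Nf 1, Hz (1 + 1) 1 (by simp) (by omega), comp_zero, zero_add]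
    have : H 1 (1 - 1) (by simp) ≫ A.d (1 - 1) 1 = (h ≫ s) ≫ A.d 0 1 := by
      rw [← H10 (by simp)]; rfl
    rw [this, Category.assoc]
  have Nidem : N ≫ N = N := by
    ext1 k
    rw [HomologicalComplex.comp_f]
    by_cases hk0 : k = 0
    · subst hk0
      rw [N0]; simp [s]
    by_cases hk1 : k = 1
    · subst hk1
      rw [N1]
      simp only [Category.assoc]
      rw [reassoc_of% hs]
    have : N.f k = 0 := by
      rw [Nf, Hz k (k - 1) (by simp) hk1, Hz (k + 1) k (by simp) (by omega)]; simp
    rw [this]; simp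
  obtain ⟨A', i, r, hir, hri⟩ := IsIdempotentComplete.idempotents_split A (𝟙 A - N)
    (by simp [Nidem])
  have hom1 : Homotopy (r ≫ i) (𝟙 A) := by
    rw [hri]
    refine (Homotopy.ofEq ?_).trans (((Homotopy.equivSubZero hN.symm).add
      (Homotopy.refl (𝟙 A))).trans (Homotopy.ofEq ?_))
    · abel
    · abel
  refine ⟨A', ⟨r, i, hom1, Homotopy.ofEq hir⟩, ?_, ?_, fun k _ => i.f k, fun k _ => r.f k,
    ?_, ?_, ?_⟩
  · intro k hk
    rw [IsZero.iff_id_eq_zero, ← HomologicalComplex.id_f, ← hir, HomologicalComplex.comp_f,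
      (hA k hk).eq_of_tgt (i.f k) 0, zero_comp]
  · have hir0 : i.f 0 ≫ r.f 0 = 𝟙 _ := by
      rw [← HomologicalComplex.comp_f, hir, HomologicalComplex.id_f]
    have hri0 : r.f 0 ≫ i.f 0 = 𝟙 _ - e.hom ≫ biprod.snd ≫ s := by
      rw [← HomologicalComplex.comp_f, hri, ← N0]; simp
    have hi0 : i.f 0 ≫ e.hom ≫ biprod.snd = 0 := by
      have : i.f 0 = i.f 0 ≫ (r.f 0 ≫ i.f 0) := by rw [reassoc_of% hir0]
      rw [this, hri0]; simp [s]
    have key : e.hom ≫ biprod.fst ≫ biprod.inl ≫ e.inv = 𝟙 _ - e.hom ≫ biprod.snd ≫ s := by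
      have : e.hom ≫ (biprod.fst ≫ biprod.inl + biprod.snd ≫ biprod.inr) ≫ e.inv = 𝟙 _ := by
        rw [biprod.total]; simp
      rw [eq_sub_iff_add_eq, ← this]
      simp only [s, Preadditive.add_comp, Preadditive.comp_add, Category.assoc]
    refine ⟨⟨i.f 0 ≫ e.hom ≫ biprod.fst, biprod.inl ≫ e.inv ≫ r.f 0, ?_, ?_⟩⟩
    · have := congrArg (fun t => i.f 0 ≫ t ≫ r.f 0) key
      simp only [Category.assoc] at this ⊢
      rw [this, Preadditive.sub_comp, Preadditive.comp_sub]
      simp [hir0, reassoc_of% hi0]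
    · simp only [Category.assoc]
      rw [reassoc_of% hri0]; simp [s]
  · intro k hk; simp
  · intro k hk; simp
  · intro k hk
    rw [← HomologicalComplex.comp_f, hir, HomologicalComplex.id_f]
end

section
/- For every coloring γ : {1, …, n} → ℕ, the sum over all crossings of the full twist word FT_n of the minimum of the two colors involved at that crossing equals twice the color size of γ: writing FT_n = [i_1, …, i_{n(n−1)}] with induced colorings γ(k), one has Σ_{k=1}^{n(n−1)} min(γ(k−1)(i_k), γ(k−1)(i_k+1)) = 2 · Σ_{1 ≤ i < j ≤ n} min(γ(i), γ(j)). -/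
/-- The sum over the crossings of a positive braid word (read top to bottom, with
current top coloring `γ`) of the minimum of the two colors involved at each crossing:
for `w = [i₁, …, i_ℓ]` this is `∑ₖ min (γ(k−1) i_k) (γ(k−1) (i_k+1))`, where the
induced colorings satisfy `γ(0) = γ` and `γ(k) = γ(k−1) ∘ s_{i_k}` with
`s_i = (i, i+1)` the adjacent transposition. -/
def crossingSum (γ : ℕ → ℕ) : List ℕ → ℕ
  | [] => 0
  | i :: w => min (γ i) (γ (i + 1)) + crossingSum (fun p => γ (Equiv.swap i (i + 1) p)) w

/-- The full twist word `FT_n` on `n` strands: the concatenation of `n` copies of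
the word `[1, 2, …, n−1]`; it has length `n(n−1)`. -/
def fullTwistWord (n : ℕ) : List ℕ :=
  (List.replicate n ((List.range (n - 1)).map (· + 1))).flatten

/-- The coloring after the letters `1, …, m`. -/
def rotColor (m : ℕ) (γ : ℕ → ℕ) : ℕ → ℕ := fun p =>
  if p = 0 then γ p else if p ≤ m then γ (p + 1) else if p = m + 1 then γ 1 else γ p

theorem crossingSum_pass (m : ℕ) (γ : ℕ → ℕ) (w : List ℕ) :
    crossingSum γ ((List.range m).map (· + 1) ++ w) =
      ∑ j ∈ Finset.range m, min (γ 1) (γ (j + 2)) + crossingSum (rotColor m γ) w := by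
  induction m generalizing w with
  | zero =>
    have : rotColor 0 γ = γ := by
      funext p
      unfold rotColor
      split_ifs <;> first | rfl | (congr 1; omega)
    simp [this]
  | succ m ih =>
    rw [List.range_succ, List.map_append, List.append_assoc, ih, Finset.sum_range_succ]
    have h : (fun p => rotColor m γ (Equiv.swap (m + 1) (m + 1 + 1) p)) = rotColor (m + 1) γ := by
      funext p
      by_cases a : p = m + 1
      · subst a
        simp [rotColor]
      by_cases b : p = m + 1 + 1
      · subst b
        simp [rotColor]
      rw [Equiv.swap_apply_of_ne_of_ne a b]
      unfold rotColor
      split_ifs <;> first | rfl | omega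
    have h1 : rotColor m γ (m + 1) = γ 1 := by simp [rotColor]
    have h2 : rotColor m γ (m + 1 + 1) = γ (m + 2) := by simp [rotColor]
    simp only [List.map_cons, List.map_nil, List.cons_append, List.nil_append, crossingSum]
    rw [h, h1, h2]
    ring

theorem crossingSum_passes (N m : ℕ) (hm : m ≤ N + 1) (γ : ℕ → ℕ) :
    crossingSum γ (List.replicate m ((List.range N).map (· + 1))).flatten
      + ∑ i ∈ Finset.range m, γ (i + 1) =
      ∑ i ∈ Finset.range m, ∑ j ∈ Finset.range (N + 1), min (γ (i + 1)) (γ (j + 1)) := by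
  induction m generalizing γ with
  | zero => simp [crossingSum]
  | succ m ih =>
    rw [List.replicate_succ, List.flatten_cons, crossingSum_pass]
    have key := ih (by omega) (rotColor N γ)
    have hs : ∀ i < N, rotColor N γ (i + 1) = γ (i + 2) := by
      intro i hi
      simp only [rotColor]
      rw [if_neg (by omega), if_pos (by omega)]
    have hN : rotColor N γ (N + 1) = γ 1 := by simp [rotColor]
    have e1 : ∑ i ∈ Finset.range m, rotColor N γ (i + 1) = ∑ i ∈ Finset.range m, γ (i + 2) :=
      Finset.sum_congr rfl fun i hi => hs i (by have := Finset.mem_range.1 hi; omega)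
    have e2 : ∑ i ∈ Finset.range m, ∑ j ∈ Finset.range (N + 1),
          min (rotColor N γ (i + 1)) (rotColor N γ (j + 1)) =
        ∑ i ∈ Finset.range m, ∑ j ∈ Finset.range (N + 1), min (γ (i + 2)) (γ (j + 1)) := by
      refine Finset.sum_congr rfl fun i hi => ?_
      rw [hs i (by have := Finset.mem_range.1 hi; omega), Finset.sum_range_succ, hN,
        Finset.sum_range_succ']
      congr 1
      exact Finset.sum_congr rfl fun j hj => by rw [hs j (Finset.mem_range.1 hj)]
    rw [e1, e2] at key
    rw [Finset.sum_range_succ' _ m, Finset.sum_range_succ' _ m]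
    have e3 : ∑ j ∈ Finset.range (N + 1), min (γ (0 + 1)) (γ (j + 1)) =
        ∑ j ∈ Finset.range N, min (γ 1) (γ (j + 2)) + γ 1 := by
      rw [Finset.sum_range_succ']; simp
    rw [e3]
    simp only [Nat.add_assoc, Nat.reduceAdd, Nat.zero_add] at key ⊢
    omega

theorem double_sum_min (n : ℕ) (γ : ℕ → ℕ) :
    ∑ i ∈ Finset.range n, ∑ j ∈ Finset.range n, min (γ (i + 1)) (γ (j + 1)) =
      2 * ∑ i ∈ Finset.Icc 1 n, ∑ j ∈ Finset.Ioc i n, min (γ i) (γ j)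
        + ∑ i ∈ Finset.range n, γ (i + 1) := by
  induction n with
  | zero => simp
  | succ n ih =>
    have e : ∑ i ∈ Finset.Icc 1 (n + 1), ∑ j ∈ Finset.Ioc i (n + 1), min (γ i) (γ j) =
        ∑ i ∈ Finset.Icc 1 n, ∑ j ∈ Finset.Ioc i n, min (γ i) (γ j)
          + ∑ i ∈ Finset.range n, min (γ (i + 1)) (γ (n + 1)) := by
      rw [Finset.sum_Icc_succ_top (by omega)]
      have h : ∑ i ∈ Finset.range n, min (γ (i + 1)) (γ (n + 1)) =
          ∑ i ∈ Finset.Icc 1 n, min (γ i) (γ (n + 1)) := by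
        rw [Finset.range_eq_Ico, Finset.sum_Ico_add' (fun i => min (γ i) (γ (n + 1))) 0 n 1]
        rfl
      rw [h, ← Finset.sum_add_distrib]
      simp only [Finset.Ioc_self, Finset.sum_empty, add_zero]
      refine Finset.sum_congr rfl fun i hi => ?_
      rw [Finset.sum_Ioc_succ_top (Finset.mem_Icc.1 hi).2]
    rw [e]
    simp only [Finset.sum_range_succ, Finset.sum_add_distrib, min_self]
    have c : ∑ j ∈ Finset.range n, min (γ (n + 1)) (γ (j + 1)) =
      ∑ i ∈ Finset.range n, min (γ (i + 1)) (γ (n + 1)) :=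
      Finset.sum_congr rfl fun j _ => min_comm _ _
    rw [c, ih]
    ring

/-- Proposition 3.11.  For every coloring `γ` of the `n` strands, the
sum over all crossings of the full twist `FT_n` of the minimum of the two colors
involved equals twice the color size of `γ`:
`∑ₖ min (γ(k−1) i_k) (γ(k−1) (i_k+1)) = 2 ∑_{1 ≤ i < j ≤ n} min (γ i) (γ j)`. -/
theorem fullTwist_crossingSum (n : ℕ) (hn : 1 ≤ n) (γ : ℕ → ℕ) :
    crossingSum γ (fullTwistWord n) =
      2 * ∑ i ∈ Finset.Icc 1 n, ∑ j ∈ Finset.Ioc i n, min (γ i) (γ j) := by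
  obtain ⟨N, rfl⟩ : ∃ N, n = N + 1 := ⟨n - 1, by omega⟩
  have h := crossingSum_passes N (N + 1) le_rfl γ
  rw [double_sum_min] at h
  exact Nat.add_right_cancel h
end

section
/- In the full twist word FT_n = [i_1, …, i_{n(n−1)}], every pair of strands crosses exactly twice: with π_k the partial permutations of FT_n, for every pair a ≠ b in {1, …, n} the number of indices k ∈ {1, …, n(n−1)} such that {π_{k−1}(a), π_{k−1}(b)} = {i_k, i_k + 1} is exactly 2. -/
/-- The underlying permutation of a positive braid word `[i₁, …, i_ℓ]`:
the composite `s_{i_ℓ} ∘ ⋯ ∘ s_{i_1}` of the adjacent transpositions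
`s_i = (i, i+1)`.  In particular, for the word `w.take k` this is the partial
permutation `π_k`, so the strand starting at top position `a` occupies position
`braidPerm (w.take k) a` after the first `k` crossings. -/
def braidPerm : List ℕ → Equiv.Perm ℕ
  | [] => 1
  | i :: w => braidPerm w * Equiv.swap i (i + 1)

/-- Recursive crossing count of the strands starting in positions `a` and `b`. -/
def crossCount : List ℕ → ℕ → ℕ → ℕ
  | [], _, _ => 0
  | i :: w, a, b => (if (a = i ∧ b = i + 1) ∨ (a = i + 1 ∧ b = i) then 1 else 0) +
      crossCount w (Equiv.swap i (i + 1) a) (Equiv.swap i (i + 1) b)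

theorem crossCount_append (u v : List ℕ) (a b : ℕ) :
    crossCount (u ++ v) a b = crossCount u a b + crossCount v (braidPerm u a) (braidPerm u b) := by
  induction u generalizing a b with
  | nil => simp [crossCount, braidPerm]
  | cons i u ih => simp [crossCount, braidPerm, ih, add_assoc]

theorem sum_Icc_pred (f : ℕ → ℕ) (m : ℕ) :
    ∑ k ∈ Finset.Icc 1 m, f (k - 1) = ∑ k ∈ Finset.range m, f k := by
  induction m with
  | zero => simp
  | succ m ih => rw [Finset.sum_Icc_succ_top (by omega), Finset.sum_range_succ, ih]; simp

theorem sum_cross_eq (w : List ℕ) (a b : ℕ) :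
    (∑ k ∈ Finset.range w.length,
      if (braidPerm (w.take k) a = w.getD k 0 ∧ braidPerm (w.take k) b = w.getD k 0 + 1) ∨
        (braidPerm (w.take k) a = w.getD k 0 + 1 ∧ braidPerm (w.take k) b = w.getD k 0)
      then 1 else 0) = crossCount w a b := by
  induction w generalizing a b with
  | nil => simp [crossCount]
  | cons i w ih =>
    rw [List.length_cons, Finset.sum_range_succ', crossCount, ← ih, add_comm]
    simp [braidPerm]

theorem braidPerm_range' (s m x : ℕ) : braidPerm (List.range' s m) x =
    if x = s then s + m else if s < x ∧ x ≤ s + m then x - 1 else x := by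
  induction m generalizing s x with
  | zero => simp only [List.range'_zero, braidPerm, Equiv.Perm.one_apply]; split_ifs <;> omega
  | succ m ih =>
    simp only [List.range'_succ, braidPerm, Equiv.Perm.mul_apply, ih, Equiv.swap_apply_def]
    split_ifs <;> omega

theorem crossCount_range' (s m x y : ℕ) (hxy : x ≠ y) : crossCount (List.range' s m) x y =
    if (x = s ∧ s < y ∧ y ≤ s + m) ∨ (y = s ∧ s < x ∧ x ≤ s + m) then 1 else 0 := by
  induction m generalizing s x y with
  | zero => simp only [List.range'_zero, crossCount]; split_ifs <;> omega
  | succ m ih =>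
    rw [List.range'_succ, crossCount, ih _ _ _ (by simpa using hxy)]
    simp only [Equiv.swap_apply_def]
    split_ifs <;> omega

theorem crossCount_rows (n m a b : ℕ) (hm : m ≤ n)
    (ha1 : 1 ≤ a) (han : a ≤ n) (hb1 : 1 ≤ b) (hbn : b ≤ n) (hab : a ≠ b) :
    crossCount (List.replicate m (List.range' 1 (n - 1))).flatten a b =
      (if a ≤ m then 1 else 0) + (if b ≤ m then 1 else 0) := by
  induction m generalizing a b with
  | zero => simp only [List.replicate_zero, List.flatten_nil, crossCount]; split_ifs <;> omega
  | succ m ih =>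
    rw [List.replicate_succ, List.flatten_cons, crossCount_append, crossCount_range' _ _ _ _ hab,
      ih _ _ (by omega)]
    · simp only [braidPerm_range']
      split_ifs <;> omega
    · rw [braidPerm_range']; split_ifs <;> omega
    · rw [braidPerm_range']; split_ifs <;> omega
    · rw [braidPerm_range']; split_ifs <;> omega
    · rw [braidPerm_range']; split_ifs <;> omega
    · simpa using hab

theorem fullTwistWord_eq (n : ℕ) :
    fullTwistWord n = (List.replicate n (List.range' 1 (n - 1))).flatten := by
  simp [fullTwistWord, List.range'_eq_map_range, add_comm]

theorem fullTwistWord_length (n : ℕ) : (fullTwistWord n).length = n * (n - 1) := by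
  simp [fullTwistWord]

/-- In the full twist word `FT_n = [i₁, …, i_{n(n−1)}]`, every pair
of strands crosses exactly twice: for all `a ≠ b` in `{1, …, n}`, the number of indices
`k ∈ {1, …, n(n−1)}` such that `{π_{k−1} a, π_{k−1} b} = {i_k, i_k + 1}` is exactly `2`
(here `π_{k−1} = braidPerm (w.take (k−1))` and `i_k` is the `(k−1)`-st entry of the
word). -/
theorem fullTwist_pair_crosses_twice (n : ℕ) (hn : 1 ≤ n) (a b : ℕ)
    (ha1 : 1 ≤ a) (han : a ≤ n) (hb1 : 1 ≤ b) (hbn : b ≤ n) (hab : a ≠ b) :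
    ((Finset.Icc 1 (n * (n - 1))).filter (fun k =>
      (braidPerm ((fullTwistWord n).take (k - 1)) a = (fullTwistWord n).getD (k - 1) 0 ∧
        braidPerm ((fullTwistWord n).take (k - 1)) b = (fullTwistWord n).getD (k - 1) 0 + 1) ∨
      (braidPerm ((fullTwistWord n).take (k - 1)) a = (fullTwistWord n).getD (k - 1) 0 + 1 ∧
        braidPerm ((fullTwistWord n).take (k - 1)) b = (fullTwistWord n).getD (k - 1) 0))).card
      = 2 := by
  rw [Finset.card_filter, ← fullTwistWord_length, sum_Icc_pred (fun k =>
    if (braidPerm ((fullTwistWord n).take k) a = (fullTwistWord n).getD k 0 ∧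
        braidPerm ((fullTwistWord n).take k) b = (fullTwistWord n).getD k 0 + 1) ∨
      (braidPerm ((fullTwistWord n).take k) a = (fullTwistWord n).getD k 0 + 1 ∧
        braidPerm ((fullTwistWord n).take k) b = (fullTwistWord n).getD k 0) then 1 else 0),
    sum_cross_eq, fullTwistWord_eq, crossCount_rows n n a b le_rfl ha1 han hb1 hbn hab]
  simp [han, hbn]
end

section
/- Let w be a nonempty positive braid word on n strands with coloring γ that is color-pure with respect to γ and has no uni-colored crossings. Then w is positively equivalent to a positive braid word w' containing a clasp, i.e. containing two equal consecutive letters [i, i] for some i ∈ {1, …, n−1}; moreover w' is again color-pure with respect to γ. -/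
/-- The coloring induced at the bottom of a positive braid word, starting from the
coloring `γ` at the top: each letter `i` replaces the current coloring `γ'` by
`γ' ∘ s_i`, where `s_i = (i, i+1)` is the adjacent transposition.  A word `w` is
color-pure with respect to `γ` when `colorAfter γ w = γ`. -/
def colorAfter (γ : ℕ → ℕ) : List ℕ → (ℕ → ℕ)
  | [] => γ
  | i :: w => colorAfter (fun p => γ (Equiv.swap i (i + 1) p)) w

/-- A positive braid word with top coloring `γ` has no uni-colored crossings:
at every crossing of the word (read top to bottom), the two colors involved are
different. -/
def NoUnicolored (γ : ℕ → ℕ) : List ℕ → Prop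
  | [] => True
  | i :: w => γ i ≠ γ (i + 1) ∧ NoUnicolored (fun p => γ (Equiv.swap i (i + 1) p)) w

/-- One elementary substitution between positive braid words: replace a consecutive
subword `[i, j]` by `[j, i]` when `|i − j| ≥ 2`, or replace `[i, i+1, i]` by
`[i+1, i, i+1]` or vice versa. -/
inductive BraidMove : List ℕ → List ℕ → Prop
  | comm (u v : List ℕ) (i j : ℕ) (hij : i + 2 ≤ j ∨ j + 2 ≤ i) :
      BraidMove (u ++ i :: j :: v) (u ++ j :: i :: v)
  | braid (u v : List ℕ) (i : ℕ) :
      BraidMove (u ++ i :: (i + 1) :: i :: v) (u ++ (i + 1) :: i :: (i + 1) :: v)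
  | braid_inv (u v : List ℕ) (i : ℕ) :
      BraidMove (u ++ (i + 1) :: i :: (i + 1) :: v) (u ++ i :: (i + 1) :: i :: v)

/-- Positive equivalence of positive braid words: a finite sequence of elementary
substitutions. -/
def PosEquiv : List ℕ → List ℕ → Prop := Relation.ReflTransGen BraidMove

theorem colorAfter_append (γ : ℕ → ℕ) (u v : List ℕ) :
    colorAfter γ (u ++ v) = colorAfter (colorAfter γ u) v := by
  induction u generalizing γ with
  | nil => rfl
  | cons a u ih => exact ih _

theorem noUni_append (γ : ℕ → ℕ) (u v : List ℕ) :
    NoUnicolored γ (u ++ v) ↔ NoUnicolored γ u ∧ NoUnicolored (colorAfter γ u) v := by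
  induction u generalizing γ with
  | nil => simp [NoUnicolored, colorAfter]
  | cons a u ih => simp [NoUnicolored, colorAfter, ih, and_assoc]

theorem sw_comm (γ : ℕ → ℕ) (i j : ℕ) (h : i + 2 ≤ j ∨ j + 2 ≤ i) :
    (fun p => γ (Equiv.swap i (i + 1) (Equiv.swap j (j + 1) p))) =
    (fun p => γ (Equiv.swap j (j + 1) (Equiv.swap i (i + 1) p))) := by
  funext p
  congr 1
  simp only [Equiv.swap_apply_def]
  grind

theorem sw_braid (γ : ℕ → ℕ) (i : ℕ) :
    (fun p => γ (Equiv.swap i (i + 1) (Equiv.swap (i + 1) (i + 1 + 1)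
      (Equiv.swap i (i + 1) p)))) =
    (fun p => γ (Equiv.swap (i + 1) (i + 1 + 1) (Equiv.swap i (i + 1)
      (Equiv.swap (i + 1) (i + 1 + 1) p)))) := by
  funext p
  congr 1
  simp only [Equiv.swap_apply_def]
  grind

theorem move_color (γ : ℕ → ℕ) {w w' : List ℕ} (h : BraidMove w w') :
    colorAfter γ w' = colorAfter γ w := by
  cases h with
  | comm u v i j hij =>
    simp only [colorAfter_append, colorAfter]
    rw [sw_comm _ i j hij]
  | braid u v i =>
    simp only [colorAfter_append, colorAfter]
    rw [sw_braid _ i]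
  | braid_inv u v i =>
    simp only [colorAfter_append, colorAfter]
    rw [sw_braid _ i]

theorem move_uni (γ : ℕ → ℕ) {w w' : List ℕ} (h : BraidMove w w')
    (hu : NoUnicolored γ w) : NoUnicolored γ w' := by
  cases h with
  | comm u v i j hij =>
    simp only [noUni_append, NoUnicolored] at hu ⊢
    rw [sw_comm _ i j hij] at hu
    obtain ⟨h1, h2, h3, h4⟩ := hu
    simp only [Equiv.swap_apply_def] at h3 ⊢
    refine ⟨h1, ?_, ?_, by simpa only [Equiv.swap_apply_def] using h4⟩ <;> grind
  | braid u v i =>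
    simp only [noUni_append, NoUnicolored] at hu ⊢
    rw [sw_braid _ i] at hu
    obtain ⟨h1, h2, h3, h4, h5⟩ := hu
    simp only [Equiv.swap_apply_def] at h3 h4 ⊢
    refine ⟨h1, ?_, ?_, ?_, by simpa only [Equiv.swap_apply_def] using h5⟩ <;> grind
  | braid_inv u v i =>
    simp only [noUni_append, NoUnicolored] at hu ⊢
    rw [← sw_braid _ i] at hu
    obtain ⟨h1, h2, h3, h4, h5⟩ := hu
    simp only [Equiv.swap_apply_def] at h3 h4 ⊢
    refine ⟨h1, ?_, ?_, ?_, by simpa only [Equiv.swap_apply_def] using h5⟩ <;> grind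

theorem move_mem {w w' : List ℕ} (h : BraidMove w w') (x : ℕ) : x ∈ w' ↔ x ∈ w := by
  cases h <;> simp only [List.mem_append, List.mem_cons] <;> tauto

theorem pe_inv {w w' : List ℕ} (h : PosEquiv w w') (γ : ℕ → ℕ) :
    colorAfter γ w' = colorAfter γ w ∧ (NoUnicolored γ w → NoUnicolored γ w') ∧
      ∀ x, x ∈ w' ↔ x ∈ w := by
  induction h with
  | refl => simp
  | tail _ hm ih =>
    exact ⟨(move_color γ hm).trans ih.1, fun h => move_uni γ hm (ih.2.1 h),
      fun x => (move_mem hm x).trans (ih.2.2 x)⟩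

theorem move_ctx {w w' : List ℕ} (a b : List ℕ) (h : BraidMove w w') :
    BraidMove (a ++ w ++ b) (a ++ w' ++ b) := by
  cases h with
  | comm u v i j hij => simpa using BraidMove.comm (a ++ u) (v ++ b) i j hij
  | braid u v i => simpa using BraidMove.braid (a ++ u) (v ++ b) i
  | braid_inv u v i => simpa using BraidMove.braid_inv (a ++ u) (v ++ b) i

theorem pe_ctx {w w' : List ℕ} (a b : List ℕ) (h : PosEquiv w w') :
    PosEquiv (a ++ w ++ b) (a ++ w' ++ b) := by
  induction h with
  | refl => exact Relation.ReflTransGen.refl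
  | tail _ hm ih => exact Relation.ReflTransGen.tail ih (move_ctx a b hm)

theorem pe_cons {w w' : List ℕ} (a : ℕ) (h : PosEquiv w w') :
    PosEquiv (a :: w) (a :: w') := by
  simpa using pe_ctx [a] [] h

/-- The descending word `[k+l-1, …, k]`. -/
def dsc (k : ℕ) : ℕ → List ℕ
  | 0 => []
  | l + 1 => (k + l) :: dsc k l

theorem mem_dsc {k l x : ℕ} (h : x ∈ dsc k l) : k ≤ x ∧ x < k + l := by
  induction l with
  | zero => simp [dsc] at h
  | succ l ih =>
    simp only [dsc, List.mem_cons] at h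
    rcases h with h | h
    · omega
    · have := ih h; omega

theorem dsc_snoc (k l : ℕ) : dsc (k + 1) l ++ [k] = dsc k (l + 1) := by
  induction l with
  | zero => simp [dsc]
  | succ l ih =>
    rw [dsc, List.cons_append, ih, dsc.eq_2 k (l + 1)]
    congr 1
    omega

theorem pe_far (u : List ℕ) (j : ℕ) (h : ∀ x ∈ u, x + 2 ≤ j ∨ j + 2 ≤ x) :
    PosEquiv (u ++ [j]) (j :: u) := by
  induction u with
  | nil => exact Relation.ReflTransGen.refl
  | cons a u ih =>
    exact Relation.ReflTransGen.tail
      (pe_cons a (ih fun x hx => h x (List.mem_cons_of_mem _ hx)))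
      (BraidMove.comm [] u a j (h a List.mem_cons_self))

theorem pe_slide (k l j : ℕ) (h1 : k ≤ j) (h2 : j + 1 < k + l) :
    PosEquiv (dsc k l ++ [j + 1]) (j :: dsc k l) := by
  induction l with
  | zero => omega
  | succ l ih =>
    by_cases h : j + 1 < k + l
    · exact Relation.ReflTransGen.tail (pe_cons (k + l) (ih h))
        (BraidMove.comm [] (dsc k l) (k + l) j (by omega))
    · obtain ⟨l', rfl⟩ : ∃ l', l = l' + 1 := ⟨l - 1, by omega⟩
      obtain rfl : j = k + l' := by omega
      have hf : PosEquiv (dsc k l' ++ [k + l' + 1]) ((k + l' + 1) :: dsc k l') :=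
        pe_far _ _ fun x hx => by have := mem_dsc hx; omega
      exact Relation.ReflTransGen.tail (pe_cons (k + l' + 1) (pe_cons (k + l') hf))
        (BraidMove.braid_inv [] (dsc k l') (k + l'))

theorem normal_form (m : ℕ) (w : List ℕ) (hw : ∀ x ∈ w, x < m + 1) :
    (∃ u v i, PosEquiv w (u ++ i :: i :: v)) ∨
    ∃ w1 k l, k + l = m + 1 ∧ (∀ x ∈ w1, x < m) ∧ PosEquiv w (w1 ++ dsc k l) := by
  induction w using List.reverseRecOn with
  | nil => exact Or.inr ⟨[], m + 1, 0, rfl, by simp, Relation.ReflTransGen.refl⟩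
  | append_singleton w j ih =>
    have hj : j < m + 1 := hw j (by simp)
    rcases ih fun x hx => hw x (by simp [hx]) with ⟨u, v, i, h⟩ | ⟨w1, k, l, hkl, hw1, h⟩
    · left
      exact ⟨u, v ++ [j], i, by simpa using pe_ctx [] [j] h⟩
    · have h' : PosEquiv (w ++ [j]) (w1 ++ (dsc k l ++ [j])) := by
        simpa using pe_ctx [] [j] h
      rcases lt_trichotomy j k with hjk | rfl | hjk
      · by_cases hjk' : j + 1 = k
        · subst hjk'
          right
          exact ⟨w1, j, l + 1, by omega, hw1, by rwa [dsc_snoc] at h'⟩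
        · right
          refine ⟨w1 ++ [j], k, l, hkl, ?_, ?_⟩
          · intro x hx
            simp only [List.mem_append, List.mem_singleton] at hx
            rcases hx with hx | hx
            · exact hw1 x hx
            · omega
          · refine Relation.ReflTransGen.trans h' ?_
            have := pe_far (dsc k l) j fun x hx => by have := mem_dsc hx; omega
            simpa [PosEquiv] using pe_ctx w1 [] this
      · left
        obtain ⟨l', rfl⟩ : ∃ l', l = l' + 1 := ⟨l - 1, by omega⟩
        rw [← dsc_snoc] at h'
        exact ⟨w1 ++ dsc (j + 1) l', [], j, by simpa using h'⟩
      · right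
        obtain ⟨j, rfl⟩ : ∃ j', j = j' + 1 := ⟨j - 1, by omega⟩
        refine ⟨w1 ++ [j], k, l, hkl, ?_, ?_⟩
        · intro x hx
          simp only [List.mem_append, List.mem_singleton] at hx
          rcases hx with hx | hx
          · exact hw1 x hx
          · omega
        · refine Relation.ReflTransGen.trans h' ?_
          have := pe_slide k l j (by omega) (by omega)
          simpa [PosEquiv] using pe_ctx w1 [] this

theorem color_fix (γ : ℕ → ℕ) (u : List ℕ) (p : ℕ) (h : ∀ x ∈ u, x + 1 < p) :
    colorAfter γ u p = γ p := by
  induction u generalizing γ with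
  | nil => rfl
  | cons a u ih =>
    have ha := h a List.mem_cons_self
    rw [colorAfter, ih _ fun x hx => h x (List.mem_cons_of_mem _ hx),
      Equiv.swap_apply_of_ne_of_ne (by omega) (by omega)]

theorem exists_clasp (m : ℕ) (w : List ℕ) (hne : w ≠ []) (hw : ∀ x ∈ w, x < m)
    (γ : ℕ → ℕ) (huni : NoUnicolored γ w) (hpure : colorAfter γ w = γ) :
    ∃ u v i, PosEquiv w (u ++ i :: i :: v) := by
  induction m generalizing w with
  | zero =>
    obtain ⟨a, w, rfl⟩ := List.exists_cons_of_ne_nil hne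
    exact absurd (hw a List.mem_cons_self) (by omega)
  | succ m ih =>
    rcases normal_form m w hw with h | ⟨w1, k, l, hkl, hw1, h⟩
    · exact h
    obtain ⟨hc, hu, hm⟩ := pe_inv h γ
    replace hu := hu huni
    rw [hpure] at hc
    cases l with
    | zero =>
      simp only [dsc, List.append_nil] at h hc hu hm
      have hne1 : w1 ≠ [] := by
        rintro rfl
        obtain ⟨a, w, rfl⟩ := List.exists_cons_of_ne_nil hne
        simpa using (hm a)
      obtain ⟨u, v, i, h2⟩ := ih w1 hne1 hw1 hu hc
      exact ⟨u, v, i, Relation.ReflTransGen.trans h h2⟩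
    | succ l =>
      exfalso
      obtain rfl : m = k + l := by omega
      rw [noUni_append] at hu
      have h1 := hu.2.1
      have h2 := congrFun hc (k + l + 1)
      rw [colorAfter_append, dsc, colorAfter, color_fix _ (dsc k l) _
        (fun x hx => by have := mem_dsc hx; omega), Equiv.swap_apply_right] at h2
      rw [color_fix γ w1 (k + l + 1) (fun x hx => by have := hw1 x hx; omega)] at h1
      exact h1 h2

/-- Lemma 3.3.  Any nonempty positive braid word `w` on `n` strands
that is color-pure with respect to a coloring `γ` and has no uni-colored crossings is
positively equivalent to a positive braid word `w'` containing a clasp, i.e. two equal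
consecutive letters `[i, i]` for some `i ∈ {1, …, n−1}`; moreover `w'` is again
color-pure with respect to `γ`. -/
theorem colorPure_posEquiv_clasp (n : ℕ) (hn : 1 ≤ n) (w : List ℕ) (hne : w ≠ [])
    (hw : ∀ i ∈ w, 1 ≤ i ∧ i < n) (γ : ℕ → ℕ)
    (huni : NoUnicolored γ w) (hpure : colorAfter γ w = γ) :
    ∃ w' : List ℕ, PosEquiv w w' ∧ (∀ i ∈ w', 1 ≤ i ∧ i < n) ∧
      (∃ (u v : List ℕ) (i : ℕ), w' = u ++ i :: i :: v ∧ 1 ≤ i ∧ i < n) ∧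
      colorAfter γ w' = γ := by
  obtain ⟨u, v, i, h⟩ := exists_clasp n w hne (fun x hx => (hw x hx).2) γ huni hpure
  obtain ⟨hc, -, hm⟩ := pe_inv h γ
  have hb : ∀ x ∈ u ++ i :: i :: v, 1 ≤ x ∧ x < n := fun x hx => hw x ((hm x).1 hx)
  exact ⟨_, h, hb, ⟨u, v, i, rfl, hb i (by simp)⟩, hc.trans hpure⟩
end

section
/- Let w = [i_1, …, i_ℓ] be a positive braid word on n strands with coloring γ. If w has no uni-colored crossings (i.e. γ(k−1)(i_k) ≠ γ(k−1)(i_k+1) for every k) and w is color-pure with respect to γ (i.e. γ(ℓ) = γ), then the underlying permutation of w is trivial: Φ(w) = id, i.e. w is a pure braid word. -/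
theorem colorAfter_braidPerm (w : List ℕ) : ∀ (γ : ℕ → ℕ) (p : ℕ),
    colorAfter γ w (braidPerm w p) = γ p := by
  induction w with
  | nil => intro γ p; rfl
  | cons i w ih =>
    intro γ p
    simp only [colorAfter, braidPerm, Equiv.Perm.mul_apply]
    rw [ih]
    simp

theorem braidPerm_lt (w : List ℕ) : ∀ (γ : ℕ → ℕ), NoUnicolored γ w →
    ∀ p q : ℕ, p < q → γ p = γ q → braidPerm w p < braidPerm w q := by
  induction w with
  | nil => intro γ _ p q h _; exact h
  | cons i w ih =>
    intro γ hu p q hpq hc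
    obtain ⟨h1, h2⟩ := hu
    simp only [braidPerm, Equiv.Perm.mul_apply]
    refine ih _ h2 _ _ ?_ (by simpa using hc)
    have hne : ¬ (p = i ∧ q = i + 1) := by
      rintro ⟨rfl, rfl⟩
      exact h1 hc
    simp only [Equiv.swap_apply_def]
    split_ifs <;> omega

/-- from the proof of Lemma 3.3.  A positive braid word on `n`
strands with coloring `γ` that has no uni-colored crossings and is color-pure with
respect to `γ` is a pure braid word: its underlying permutation is trivial. -/
theorem colorPure_noUnicolored_isPure (n : ℕ) (hn : 1 ≤ n) (w : List ℕ)
    (hw : ∀ i ∈ w, 1 ≤ i ∧ i < n) (γ : ℕ → ℕ)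
    (huni : NoUnicolored γ w) (hpure : colorAfter γ w = γ) :
    braidPerm w = 1 := by
  have hcol : ∀ p, γ (braidPerm w p) = γ p := by
    intro p
    have h := colorAfter_braidPerm w γ p
    rwa [hpure] at h
  have key : ∀ p, braidPerm w p = p := by
    intro p
    induction p using Nat.strong_induction_on with
    | _ p ih =>
      by_contra hp
      obtain ⟨q, hq⟩ := (braidPerm w).surjective p
      have hge : ¬ braidPerm w p < p := fun h =>
        hp ((braidPerm w).injective (ih _ h))
      have hqp : ¬ q < p := fun h => by
        have := ih q h
        omega
      have hne : q ≠ p := fun h => hp (h ▸ hq)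
      have hc : γ p = γ q := by rw [← hcol q, hq]
      have hlt := braidPerm_lt w γ huni p q (by omega) hc
      omega
  ext p
  simp [key p]
end

section
/- Let w = [i_1, …, i_ℓ] be a positive braid word on n strands with coloring γ having no uni-colored crossings (i.e. γ(k−1)(i_k) ≠ γ(k−1)(i_k+1) for every k). Then strands of equal color never change their relative order: for all positions a < b in {1, …, n} with γ(a) = γ(b), and for every 0 ≤ k ≤ ℓ, one has π_k(a) < π_k(b). -/
theorem braid_order_aux (w : List ℕ) : ∀ (γ : ℕ → ℕ), NoUnicolored γ w →
    ∀ a b : ℕ, a < b → γ a = γ b → ∀ k : ℕ,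
      braidPerm (w.take k) a < braidPerm (w.take k) b := by
  induction w with
  | nil => intro γ _ a b hab _ k; simpa [braidPerm] using hab
  | cons i w ih =>
    intro γ h a b hab hcol k
    cases k with
    | zero => simpa [braidPerm] using hab
    | succ k =>
      obtain ⟨h1, h2⟩ := h
      simp only [List.take_succ_cons, braidPerm, Equiv.Perm.mul_apply]
      apply ih _ h2
      · have hne : ¬ (a = i ∧ b = i + 1) := by
          rintro ⟨rfl, rfl⟩
          exact h1 hcol
        simp only [Equiv.swap_apply_def]
        split_ifs <;> omega
      · simpa using hcol

/-- In a positive braid word with coloring `γ` and no uni-colored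
crossings, strands of equal color never change their relative order: if `a < b` are
positions in `{1, …, n}` with `γ a = γ b`, then `π_k a < π_k b` for every
`0 ≤ k ≤ ℓ`. -/
theorem equal_colors_preserve_order (n : ℕ) (hn : 1 ≤ n) (w : List ℕ)
    (hw : ∀ i ∈ w, 1 ≤ i ∧ i < n) (γ : ℕ → ℕ) (huni : NoUnicolored γ w)
    (a b : ℕ) (ha1 : 1 ≤ a) (hab : a < b) (hbn : b ≤ n) (hcol : γ a = γ b) :
    ∀ k : ℕ, k ≤ w.length →
      braidPerm (w.take k) a < braidPerm (w.take k) b := by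
  intro k _
  exact braid_order_aux w γ huni a b hab hcol k
end

section
/- If w is a nonempty positive braid word on n strands whose underlying permutation is trivial (Φ(w) = id in S_n), then w is positively equivalent to a positive braid word containing two equal consecutive letters [i, i] for some i ∈ {1, …, n−1} (a clasp). -/
/-- The descending run `[a+k-1, …, a]`. -/
def descRun (a : ℕ) : ℕ → List ℕ
  | 0 => []
  | k + 1 => (a + k) :: descRun a k

theorem descRun_snoc (a k : ℕ) : descRun a (k + 1) = descRun (a + 1) k ++ [a] := by
  induction k with
  | zero => simp [descRun]
  | succ k ih =>
    rw [descRun, ih]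
    simp [descRun]
    omega

theorem BraidMove.context {w w' : List ℕ} (h : BraidMove w w') (p q : List ℕ) :
    BraidMove (p ++ w ++ q) (p ++ w' ++ q) := by
  cases h with
  | comm u v i j hij => simpa using BraidMove.comm (p ++ u) (v ++ q) i j hij
  | braid u v i => simpa using BraidMove.braid (p ++ u) (v ++ q) i
  | braid_inv u v i => simpa using BraidMove.braid_inv (p ++ u) (v ++ q) i

theorem PosEquiv.context {w w' : List ℕ} (h : PosEquiv w w') (p q : List ℕ) :
    PosEquiv (p ++ w ++ q) (p ++ w' ++ q) := by
  induction h with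
  | refl => exact Relation.ReflTransGen.refl
  | tail _ h ih => exact Relation.ReflTransGen.tail ih (h.context p q)

theorem PosEquiv.cons {w w' : List ℕ} (h : PosEquiv w w') (a : ℕ) :
    PosEquiv (a :: w) (a :: w') := by
  simpa using h.context [a] []

theorem PosEquiv.trans {u v w : List ℕ} (h : PosEquiv u v) (h' : PosEquiv v w) :
    PosEquiv u w := Relation.ReflTransGen.trans h h'

theorem PosEquiv.swap_head (i j : ℕ) (v : List ℕ) (hij : i + 2 ≤ j ∨ j + 2 ≤ i) :
    PosEquiv (i :: j :: v) (j :: i :: v) :=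
  Relation.ReflTransGen.single (BraidMove.comm [] v i j hij)

theorem descRun_comm_low (a k i : ℕ) (h : i + 2 ≤ a) :
    PosEquiv (descRun a k ++ [i]) (i :: descRun a k) := by
  induction k with
  | zero => exact Relation.ReflTransGen.refl
  | succ k ih => exact (ih.cons (a + k)).trans (PosEquiv.swap_head _ _ _ (by omega))

theorem descRun_comm_high (a k i : ℕ) (h : a + k + 1 ≤ i) :
    PosEquiv (descRun a k ++ [i]) (i :: descRun a k) := by
  induction k with
  | zero => exact Relation.ReflTransGen.refl
  | succ k ih =>
    exact ((ih (by omega)).cons (a + k)).trans (PosEquiv.swap_head _ _ _ (by omega))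

theorem descRun_slide (a k i : ℕ) (h : a ≤ i) (h' : i + 1 < a + k) :
    PosEquiv (descRun a k ++ [i + 1]) (i :: descRun a k) := by
  induction k with
  | zero => omega
  | succ k ih =>
    by_cases hk : i + 1 < a + k
    · exact ((ih hk).cons (a + k)).trans (PosEquiv.swap_head _ _ _ (by omega))
    · obtain _ | k := k
      · omega
      · obtain rfl : i = a + k := by omega
        have h1 := ((descRun_comm_high a k (a + k + 1) le_rfl).cons (a + k)).cons (a + k + 1)
        exact h1.trans (Relation.ReflTransGen.single
          (BraidMove.braid_inv [] (descRun a k) (a + k)))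

/-- Being positively equivalent to a word with a clasp. -/
def HasClasp (w : List ℕ) : Prop :=
  ∃ w', PosEquiv w w' ∧ ∃ (u v : List ℕ) (i : ℕ), w' = u ++ i :: i :: v

theorem normalForm (M : ℕ) (w : List ℕ) (hw : ∀ i ∈ w, i < M + 1) :
    HasClasp w ∨ ∃ (u : List ℕ) (a k : ℕ), (∀ i ∈ u, i < M) ∧ a + k = M + 1 ∧
      PosEquiv w (u ++ descRun a k) := by
  induction w using List.reverseRecOn with
  | nil =>
    exact Or.inr ⟨[], M + 1, 0, by simp, rfl, Relation.ReflTransGen.refl⟩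
  | append_singleton w i ih =>
    have hi : i < M + 1 := hw i (by simp)
    rcases ih (fun j hj => hw j (by simp [hj])) with ⟨w', h, u, v, j, rfl⟩ | ⟨u, a, k, hu, hak, h⟩
    · left
      exact ⟨_, h.context [] [i], u, v ++ [i], j, by simp⟩
    · have h0 : PosEquiv (w ++ [i]) (u ++ (descRun a k ++ [i])) := by
        simpa using h.context [] [i]
      rcases (by omega : i + 2 ≤ a ∨ i + 1 = a ∨ i = a ∨ a < i) with h1 | h1 | h1 | h1
      · right
        refine ⟨u ++ [i], a, k, ?_, hak, h0.trans ?_⟩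
        · intro j hj
          rcases List.mem_append.1 hj with hj | hj
          · exact hu j hj
          · simp at hj; omega
        · simpa using (descRun_comm_low a k i h1).context u []
      · right
        subst h1
        refine ⟨u, i, k + 1, hu, by omega, ?_⟩
        rw [descRun_snoc]
        exact h0
      · left
        subst h1
        obtain _ | k := k
        · omega
        · rw [descRun_snoc] at h0
          exact ⟨_, h0, u ++ descRun (i + 1) k, [], i, by simp⟩
      · right
        obtain _ | i := i
        · omega
        refine ⟨u ++ [i], a, k, ?_, hak, h0.trans ?_⟩
        · intro j hj
          rcases List.mem_append.1 hj with hj | hj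
          · exact hu j hj
          · simp at hj; omega
        · simpa using (descRun_slide a k i (by omega) (by omega)).context u []

theorem braidPerm_append (u v : List ℕ) : braidPerm (u ++ v) = braidPerm v * braidPerm u := by
  induction u with
  | nil => simp [braidPerm]
  | cons i u ih => simp [braidPerm, ih, mul_assoc]

theorem swap_comm_far (i j : ℕ) (h : i + 2 ≤ j ∨ j + 2 ≤ i) :
    Equiv.swap i (i + 1) * Equiv.swap j (j + 1) =
      Equiv.swap j (j + 1) * Equiv.swap i (i + 1) := by
  ext x
  simp only [Equiv.Perm.mul_apply, Equiv.swap_apply_def]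
  grind

theorem swap_braid (i : ℕ) :
    Equiv.swap i (i + 1) * Equiv.swap (i + 1) (i + 1 + 1) * Equiv.swap i (i + 1) =
      Equiv.swap (i + 1) (i + 1 + 1) * Equiv.swap i (i + 1) *
        Equiv.swap (i + 1) (i + 1 + 1) := by
  ext x
  simp only [Equiv.Perm.mul_apply, Equiv.swap_apply_def]
  grind

theorem BraidMove.perm_eq {w w' : List ℕ} (h : BraidMove w w') : braidPerm w = braidPerm w' := by
  cases h with
  | comm u v i j hij =>
    simp only [braidPerm_append, braidPerm, mul_assoc]
    rw [← mul_assoc (Equiv.swap j (j + 1)), swap_comm_far j i hij.symm, mul_assoc]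
  | braid u v i =>
    have := swap_braid i
    simp only [braidPerm_append, braidPerm]
    simp only [mul_assoc] at this ⊢
    congr 1
    simp only [← mul_assoc] at this ⊢
    rw [this]
  | braid_inv u v i =>
    have := swap_braid i
    simp only [braidPerm_append, braidPerm]
    simp only [mul_assoc] at this ⊢
    congr 1
    simp only [← mul_assoc] at this ⊢
    rw [this]

theorem PosEquiv.perm_eq {w w' : List ℕ} (h : PosEquiv w w') : braidPerm w = braidPerm w' := by
  induction h with
  | refl => rfl
  | tail _ h ih => exact ih.trans h.perm_eq

theorem PosEquiv.length_eq {w w' : List ℕ} (h : PosEquiv w w') : w.length = w'.length := by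
  induction h with
  | refl => rfl
  | tail _ h ih =>
    rw [ih]
    cases h <;> simp

theorem PosEquiv.mem_iff {w w' : List ℕ} (h : PosEquiv w w') (x : ℕ) : x ∈ w ↔ x ∈ w' := by
  induction h with
  | refl => rfl
  | tail _ h ih =>
    rw [ih]
    cases h <;> simp <;> tauto

theorem braidPerm_fix (M : ℕ) (u : List ℕ) (hu : ∀ i ∈ u, i < M) :
    braidPerm u (M + 1) = M + 1 := by
  induction u with
  | nil => rfl
  | cons i u ih =>
    have hi := hu i (by simp)
    rw [braidPerm, Equiv.Perm.mul_apply, Equiv.swap_apply_of_ne_of_ne (by omega) (by omega)]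
    exact ih (fun j hj => hu j (by simp [hj]))

theorem braidPerm_descRun (a k : ℕ) : braidPerm (descRun a k) (a + k) = a := by
  induction k with
  | zero => rfl
  | succ k ih =>
    rw [descRun, braidPerm, Equiv.Perm.mul_apply, ← add_assoc, Equiv.swap_apply_right]
    exact ih

theorem hasClasp_of_pure (m : ℕ) : ∀ w : List ℕ, w ≠ [] → (∀ i ∈ w, i < m) →
    braidPerm w = 1 → HasClasp w := by
  induction m with
  | zero =>
    intro w hne hw _
    obtain ⟨x, hx⟩ := List.exists_mem_of_ne_nil w hne
    exact absurd (hw x hx) (by omega)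
  | succ M ih =>
    intro w hne hw hp
    rcases normalForm M w hw with h | ⟨u, a, k, hu, hak, h⟩
    · exact h
    · have h1 : braidPerm (u ++ descRun a k) (M + 1) = M + 1 := by
        rw [← h.perm_eq, hp]; rfl
      rw [braidPerm_append, Equiv.Perm.mul_apply, braidPerm_fix M u hu, ← hak,
        braidPerm_descRun] at h1
      obtain rfl : k = 0 := by omega
      simp only [descRun, List.append_nil] at h
      have hu0 : u ≠ [] := by
        rintro rfl
        exact hne (List.length_eq_zero_iff.1 h.length_eq)
      obtain ⟨w', h', hc⟩ := ih u hu0 hu (h.perm_eq ▸ hp)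
      exact ⟨w', h.trans h', hc⟩

/-- A nonempty positive braid word on `n` strands whose underlying
permutation is trivial is positively equivalent to a positive braid word containing a
clasp: two equal consecutive letters `[i, i]` for some `i ∈ {1, …, n−1}`. -/
theorem pure_posEquiv_clasp (n : ℕ) (hn : 1 ≤ n) (w : List ℕ) (hne : w ≠ [])
    (hw : ∀ i ∈ w, 1 ≤ i ∧ i < n) (hpure : braidPerm w = 1) :
    ∃ w' : List ℕ, PosEquiv w w' ∧
      ∃ (u v : List ℕ) (i : ℕ), w' = u ++ i :: i :: v ∧ 1 ≤ i ∧ i < n := by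
  obtain ⟨w', h, u, v, i, rfl⟩ :=
    hasClasp_of_pure n w hne (fun i hi => (hw i hi).2) hpure
  exact ⟨_, h, u, v, i, rfl, hw i ((h.mem_iff i).2 (by simp))⟩
end
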